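/- Let f be a multicritical circle map with irrational rotation number. There exists a constant C > 1 depending only on f such that for all n ≥ 0 and for each pair of adjacent atoms I, J of the n-th dynamical partition P_n(c_k) associated to a critical point c_k of f, one has C^{−1}|J| ≤ |I| ≤ C|J|. -/

import Mathlib

open Set Filter MeasureTheory

noncomputable section

/-- The Schwarzian derivative `Sf = (f''/f')' - (1/2) (f''/f')^2`. -/
def schwarzianDeriv (f : ℝ → ℝ) (x : ℝ) : ℝ :=
  deriv (fun y => deriv (deriv f) y / deriv f y) x
    - (1 / 2) * (deriv (deriv f) x / deriv f x) ^ 2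

/-- A multicritical circle map, described through its lift `F : ℝ → ℝ` to the real line.
It is an orientation-preserving `C^3` circle homeomorphism with finitely many critical
points `c 0, …, c (N-1)`, each of non-flat power-law type: near `c i` the derivative is
pinched between two multiples of `|x - c i| ^ (s i - 1)` with `s i > 1`, the Schwarzian
derivative is negative on a punctured neighborhood of each critical point, and
`log (F')` has bounded variation (bounded by `v`) off the critical neighborhoods. -/
structure MCM where
  /-- the lift of the circle map -/
  F : ℝ → ℝ
  smooth : ContDiff ℝ 3 F
  mono : StrictMono F
  deg1 : ∀ x, F (x + 1) = F x + 1
  /-- number of critical points -/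
  N : ℕ
  N_pos : 0 < N
  /-- the critical points (one representative in `[0,1)` for each) -/
  c : Fin N → ℝ
  c_mem : ∀ i, c i ∈ Set.Ico (0 : ℝ) 1
  c_inj : Function.Injective c
  isCrit : ∀ i, deriv F (c i) = 0
  critOnly : ∀ x, deriv F x = 0 → ∃ (i : Fin N) (k : ℤ), x = c i + (k : ℝ)
  /-- neighborhoods of the critical points -/
  W : Fin N → Set ℝ
  W_open : ∀ i, IsOpen (W i)
  c_mem_W : ∀ i, c i ∈ W i
  /-- the criticalities (power-law exponents) -/
  s : Fin N → ℝ
  s_gt_one : ∀ i, 1 < s i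
  al : Fin N → ℝ
  be : Fin N → ℝ
  al_pos : ∀ i, 0 < al i
  al_lt_be : ∀ i, al i < be i
  powerLaw : ∀ i, ∀ x ∈ W i, x ≠ c i →
    al i * |x - c i| ^ (s i - 1) < deriv F x ∧
      deriv F x < be i * |x - c i| ^ (s i - 1)
  negSchwarzian : ∀ i, ∀ x ∈ W i, x ≠ c i → schwarzianDeriv F x < 0
  /-- bound for the variation of `log DF` off the critical neighborhoods -/
  v : ℝ
  v_pos : 0 < v
  logDF_var : eVariationOn (fun x => Real.log (deriv F x))
      (Set.Icc 0 1 \ ⋃ (i) (k : ℤ), (fun y => y + (k : ℝ)) '' W i) ≤ ENNReal.ofReal v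

/-- The circle map with lift `F` has rotation number `ρ`. -/
def HasRotationNumber (F : ℝ → ℝ) (ρ : ℝ) : Prop :=
  Tendsto (fun n : ℕ => F^[n] 0 / n) atTop (nhds ρ)

/-- The Gauss map `x ↦ {1/x}`. -/
def gaussMap (x : ℝ) : ℝ := Int.fract x⁻¹

/-- Partial quotients `a_n` of the continued fraction expansion of `ρ ∈ (0,1)`. -/
def cfDigit (ρ : ℝ) (n : ℕ) : ℕ := (⌊(gaussMap^[n] ρ)⁻¹⌋).toNat

/-- Return times: the denominators `q_n` of the convergents of `ρ`,
`q_0 = 1`, `q_1 = a_0`, `q_{n+1} = a_n q_n + q_{n-1}`. -/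
def qDen (ρ : ℝ) : ℕ → ℕ
  | 0 => 1
  | 1 => cfDigit ρ 0
  | n + 2 => cfDigit ρ (n + 1) * qDen ρ (n + 1) + qDen ρ n

/-- Numerators `p_n` of the convergents of `ρ`:
`p_0 = 0`, `p_1 = 1`, `p_{n+1} = a_n p_n + p_{n-1}`. -/
def pNum (ρ : ℝ) : ℕ → ℕ
  | 0 => 0
  | 1 => 1
  | n + 2 => cfDigit ρ (n + 1) * pNum ρ (n + 1) + pNum ρ n

/-- The lift of the atom `I_ℓ^j(x) = f^j(I_ℓ(x))`, where `I_ℓ(x)` is the interval with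
endpoints `x` and `f^{q_ℓ}(x)`; the lift of `f^{q_ℓ}(x)` adjacent to `x` is
`F^[q_ℓ] x - p_ℓ`. -/
def atomSet (F : ℝ → ℝ) (ρ x : ℝ) (ℓ j : ℕ) : Set ℝ :=
  Set.uIcc (F^[j] x) (F^[j + qDen ρ ℓ] x - (pNum ρ ℓ : ℝ))

/-- The length of the atom `I_ℓ^j(x)`. -/
def atomLen (F : ℝ → ℝ) (ρ x : ℝ) (ℓ j : ℕ) : ℝ :=
  |F^[j + qDen ρ ℓ] x - (pNum ρ ℓ : ℝ) - F^[j] x|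

/-- The two endpoints (as lifts) of the atom `I_ℓ^j(x)`. -/
def atomEnds (F : ℝ → ℝ) (ρ x : ℝ) (ℓ j : ℕ) : Set ℝ :=
  {F^[j] x, F^[j + qDen ρ ℓ] x - (pNum ρ ℓ : ℝ)}

/-- `(ℓ, j)` indexes an atom of the `n`-th dynamical partition
`P_n(x) = {I_n^i(x) : i < q_{n+1}} ∪ {I_{n+1}^j(x) : j < q_n}`. -/
def IsAtomIdx (ρ : ℝ) (n ℓ j : ℕ) : Prop :=
  (ℓ = n ∧ j < qDen ρ (n + 1)) ∨ (ℓ = n + 1 ∧ j < qDen ρ n)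

/-- Two distinct atoms are adjacent when they share an endpoint on the circle,
i.e. when some endpoints of their lifts differ by an integer. -/
def AdjacentAtoms (F : ℝ → ℝ) (ρ x : ℝ) (ℓ₁ j₁ ℓ₂ j₂ : ℕ) : Prop :=
  (ℓ₁, j₁) ≠ (ℓ₂, j₂) ∧
    ∃ u ∈ atomEnds F ρ x ℓ₁ j₁, ∃ w ∈ atomEnds F ρ x ℓ₂ j₂, ∃ k : ℤ, w = u + (k : ℝ)

/-!
The rotation by `ρ` is understood through its continued fraction: `n`-th level closest returns are
translations by the alternating errors `q_n ρ - p_n`, and a semiconjugacy to the rotation transfers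
this combinatorics to the lift of `f`. The metric information comes from a single inequality.
Iterating `f` increases a cross-ratio at most by a factor depending on how many times the
intermediate intervals cover the circle: near a critical point the negative Schwarzian derivative
makes cross-ratios decrease, elsewhere the distortion is controlled by the total length, and the
intervals that contain a critical point are boundedly many. By this inequality, space on both sides
of an interval persists under inverse branches of bounded multiplicity. The shortest interval
between a point and its closest return of level `n` has space on both sides, which spreads over the
circle and makes neighbouring intervals of level `n` comparable.

For two consecutive levels, the ratio `r` of the lengths of the returns to a critical point is
bounded because one application of `f` turns it into `r ^ s` with `s > 1`, whereas the cross-ratio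
inequality along the rest of the return costs only a factor `A * (1 + r)`. The bound is then
transported along the orbit of the critical point to all pairs of adjacent atoms.
-/

/-! ### Continued fractions -/

section ContinuedFraction

variable {ρ : ℝ}

lemma irrational_gaussMap_iterate (hirr : Irrational ρ) (n : ℕ) :
    Irrational (gaussMap^[n] ρ) := by
  induction n with
  | zero => exact hirr
  | succ n ih =>
    rw [Function.iterate_succ_apply']
    exact (irrational_inv_iff.mpr ih).sub_intCast _

lemma gaussMap_iterate_mem_Ioo (hirr : Irrational ρ) (hmem : ρ ∈ Ioo (0 : ℝ) 1) (n : ℕ) :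
    gaussMap^[n] ρ ∈ Ioo (0 : ℝ) 1 := by
  cases n with
  | zero => exact hmem
  | succ n =>
    have hne := (irrational_gaussMap_iterate hirr (n + 1)).ne_zero
    rw [Function.iterate_succ_apply'] at hne ⊢
    exact ⟨(Int.fract_nonneg _).lt_of_ne' hne, Int.fract_lt_one _⟩

lemma cfDigit_eq (hirr : Irrational ρ) (hmem : ρ ∈ Ioo (0 : ℝ) 1) (n : ℕ) :
    (cfDigit ρ n : ℝ) = (gaussMap^[n] ρ)⁻¹ - gaussMap^[n + 1] ρ := by
  have hpos : 0 ≤ ⌊(gaussMap^[n] ρ)⁻¹⌋ :=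
    Int.floor_nonneg.mpr (inv_nonneg.mpr (gaussMap_iterate_mem_Ioo hirr hmem n).1.le)
  have hcast : (cfDigit ρ n : ℝ) = (⌊(gaussMap^[n] ρ)⁻¹⌋ : ℝ) :=
    mod_cast Int.toNat_of_nonneg hpos
  rw [hcast, Function.iterate_succ_apply', gaussMap, Int.self_sub_fract]

lemma cfDigit_pos (hirr : Irrational ρ) (hmem : ρ ∈ Ioo (0 : ℝ) 1) (n : ℕ) :
    0 < cfDigit ρ n := by
  obtain ⟨h₀, h₁⟩ := gaussMap_iterate_mem_Ioo hirr hmem n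
  have hinv := (one_lt_inv₀ h₀).mpr h₁
  have hlt := (gaussMap_iterate_mem_Ioo hirr hmem (n + 1)).2
  have : (0 : ℝ) < cfDigit ρ n := by rw [cfDigit_eq hirr hmem]; linarith
  exact_mod_cast this

lemma qDen_pos (hirr : Irrational ρ) (hmem : ρ ∈ Ioo (0 : ℝ) 1) : ∀ n, 0 < qDen ρ n
  | 0 => Nat.one_pos
  | 1 => cfDigit_pos hirr hmem 0
  | n + 2 => Nat.add_pos_right _ (qDen_pos hirr hmem n)

lemma qDen_le_succ (hirr : Irrational ρ) (hmem : ρ ∈ Ioo (0 : ℝ) 1) (n : ℕ) :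
    qDen ρ n ≤ qDen ρ (n + 1) := by
  cases n with
  | zero => exact cfDigit_pos hirr hmem 0
  | succ n =>
    exact (Nat.le_mul_of_pos_left _ (cfDigit_pos hirr hmem (n + 1))).trans (Nat.le_add_right _ _)

lemma qDen_mul_pNum_sub (ρ : ℝ) (n : ℕ) :
    (qDen ρ n : ℤ) * pNum ρ (n + 1) - qDen ρ (n + 1) * pNum ρ n = (-1) ^ n := by
  induction n with
  | zero => simp [qDen, pNum]
  | succ n ih =>
    simp only [qDen, pNum]
    push_cast
    rw [pow_succ, ← ih]
    ring

/-- The signed error `θ_n = q_n ρ - p_n` of the `n`-th convergent: the rotation by `ρ`, iterated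
`q_n` times, is the rotation by `θ_n`. -/
def cfError (ρ : ℝ) (n : ℕ) : ℝ := qDen ρ n * ρ - pNum ρ n

lemma cfError_succ (hirr : Irrational ρ) (hmem : ρ ∈ Ioo (0 : ℝ) 1) (n : ℕ) :
    cfError ρ (n + 1) = -gaussMap^[n + 1] ρ * cfError ρ n := by
  have hdigit := cfDigit_eq hirr hmem n
  have hne := (irrational_gaussMap_iterate hirr n).ne_zero
  induction n with
  | zero =>
    simp only [cfError, qDen, pNum, hdigit, zero_add, Function.iterate_zero_apply] at *
    push_cast
    field_simp
    ring
  | succ n ih =>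
    have hrec : cfError ρ (n + 2) = cfDigit ρ (n + 1) * cfError ρ (n + 1) + cfError ρ n := by
      simp only [cfError, qDen, pNum]; push_cast; ring
    rw [hrec, hdigit, ih (cfDigit_eq hirr hmem n) (irrational_gaussMap_iterate hirr n).ne_zero]
    field_simp
    ring

lemma cfError_ne_zero (hirr : Irrational ρ) (hmem : ρ ∈ Ioo (0 : ℝ) 1) (n : ℕ) :
    cfError ρ n ≠ 0 := by
  have h := (hirr.natCast_mul (qDen_pos hirr hmem n).ne').sub_natCast (pNum ρ n)
  exact h.ne_zero

lemma abs_cfError_succ_lt (hirr : Irrational ρ) (hmem : ρ ∈ Ioo (0 : ℝ) 1) (n : ℕ) :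
    |cfError ρ (n + 1)| < |cfError ρ n| := by
  obtain ⟨h₀, h₁⟩ := gaussMap_iterate_mem_Ioo hirr hmem (n + 1)
  rw [cfError_succ hirr hmem, abs_mul, abs_neg, abs_of_pos h₀]
  exact mul_lt_of_lt_one_left (abs_pos.mpr (cfError_ne_zero hirr hmem n)) h₁

lemma abs_cfError_le_one (hirr : Irrational ρ) (hmem : ρ ∈ Ioo (0 : ℝ) 1) (n : ℕ) :
    |cfError ρ n| ≤ 1 := by
  have hanti : Antitone fun n => |cfError ρ n| :=
    antitone_nat_of_succ_le fun n => (abs_cfError_succ_lt hirr hmem n).le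
  refine (hanti n.zero_le).trans ?_
  simpa [cfError, qDen, pNum, abs_of_pos hmem.1] using hmem.2.le

lemma exists_convergent_combination (ρ : ℝ) (n : ℕ) (m k : ℤ) :
    ∃ u v : ℤ, m = u * qDen ρ n + v * qDen ρ (n + 1) ∧ k = u * pNum ρ n + v * pNum ρ (n + 1) := by
  have hdet := qDen_mul_pNum_sub ρ n
  have hsq : (-1 : ℤ) ^ n * (-1) ^ n = 1 := by rw [← mul_pow]; simp
  refine ⟨(-1) ^ n * (m * pNum ρ (n + 1) - k * qDen ρ (n + 1)),
    (-1) ^ n * (qDen ρ n * k - pNum ρ n * m), ?_, ?_⟩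
  · linear_combination (-m) * hsq - m * (-1) ^ n * hdet
  · linear_combination (-k) * hsq - k * (-1) ^ n * hdet

lemma one_le_abs_sub_mul {γ u v : ℝ} (hγ : γ ∈ Ioo (0 : ℝ) 1)
    (huv : v = 0 ∧ 1 ≤ |u| ∨ 1 ≤ u ∧ v ≤ 0 ∨ u ≤ -1 ∧ 0 ≤ v) : 1 ≤ |u - v * γ| := by
  obtain ⟨hγ₀, -⟩ := hγ
  rcases huv with ⟨rfl, hu⟩ | ⟨hu, hv⟩ | ⟨hu, hv⟩
  · simpa using hu
  · exact le_abs.mpr (.inl (by nlinarith))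
  · exact le_abs.mpr (.inr (by nlinarith))

lemma abs_cfError_le (hirr : Irrational ρ) (hmem : ρ ∈ Ioo (0 : ℝ) 1) (n : ℕ) {m k : ℤ}
    (hm : |m| < qDen ρ (n + 1)) (hne : m ≠ 0 ∨ k ≠ 0) : |cfError ρ n| ≤ |m * ρ - k| := by
  obtain ⟨u, v, hmuv, hkuv⟩ := exists_convergent_combination ρ n m k
  have hq : (0 : ℤ) < qDen ρ n := mod_cast qDen_pos hirr hmem n
  have hq' : (0 : ℤ) < qDen ρ (n + 1) := mod_cast qDen_pos hirr hmem (n + 1)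
  rw [abs_lt] at hm
  have hsigns : v = 0 ∧ u ≠ 0 ∨ 1 ≤ u ∧ v ≤ 0 ∨ u ≤ -1 ∧ 0 ≤ v := by
    rcases lt_trichotomy v 0 with hv | rfl | hv
    · have : 0 < u := by by_contra! hu; nlinarith
      omega
    · refine .inl ⟨rfl, ?_⟩
      rintro rfl
      simp_all
    · have : u < 0 := by by_contra! hu; nlinarith
      omega
  have hkey : 1 ≤ |(u : ℝ) - v * gaussMap^[n + 1] ρ| := by
    refine one_le_abs_sub_mul (gaussMap_iterate_mem_Ioo hirr hmem (n + 1)) ?_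
    have h : v = 0 ∧ 1 ≤ |u| ∨ 1 ≤ u ∧ v ≤ 0 ∨ u ≤ -1 ∧ 0 ≤ v :=
      hsigns.imp_left fun h => ⟨h.1, Int.one_le_abs h.2⟩
    exact_mod_cast h
  have hval : m * ρ - k = (u - v * gaussMap^[n + 1] ρ) * cfError ρ n := by
    have hsucc := cfError_succ hirr hmem n
    simp only [hmuv, hkuv, cfError] at hsucc ⊢
    push_cast
    linear_combination (v : ℝ) * hsucc
  rw [hval, abs_mul]
  exact le_mul_of_one_le_left (abs_nonneg _) hkey

lemma one_le_two_mul_qDen_mul_abs_cfError (hirr : Irrational ρ) (hmem : ρ ∈ Ioo (0 : ℝ) 1)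
    (n : ℕ) : 1 ≤ 2 * (qDen ρ (n + 1) * |cfError ρ n|) := by
  have hdet : qDen ρ (n + 1) * cfError ρ n - qDen ρ n * cfError ρ (n + 1) = (-1) ^ n := by
    have h : ((qDen ρ n : ℝ) * pNum ρ (n + 1) - qDen ρ (n + 1) * pNum ρ n) = (-1) ^ n := by
      exact_mod_cast qDen_mul_pNum_sub ρ n
    rw [← h]; simp only [cfError]; ring
  have hq : (qDen ρ n : ℝ) ≤ qDen ρ (n + 1) := mod_cast qDen_le_succ hirr hmem n
  calc (1 : ℝ) = |qDen ρ (n + 1) * cfError ρ n - qDen ρ n * cfError ρ (n + 1)| := by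
        rw [hdet]; simp
    _ ≤ qDen ρ (n + 1) * |cfError ρ n| + qDen ρ n * |cfError ρ (n + 1)| := by
        simpa only [abs_mul, Nat.abs_cast] using
          abs_sub (qDen ρ (n + 1) * cfError ρ n) (qDen ρ n * cfError ρ (n + 1))
    _ ≤ 2 * (qDen ρ (n + 1) * |cfError ρ n|) := by
        have := mul_le_mul hq (abs_cfError_succ_lt hirr hmem n).le (abs_nonneg _)
          (Nat.cast_nonneg _)
        linarith

lemma exists_natCast_mul_pNum_sub (hirr : Irrational ρ) (hmem : ρ ∈ Ioo (0 : ℝ) 1) (n : ℕ)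
    (r : ℤ) : ∃ i < qDen ρ (n + 1), ∃ k : ℤ, (i : ℤ) * pNum ρ (n + 1) - k * qDen ρ (n + 1) = r := by
  have hdet := qDen_mul_pNum_sub ρ n
  have hsq : (-1 : ℤ) ^ n * (-1) ^ n = 1 := by rw [← mul_pow]; simp
  have hq : (0 : ℤ) < qDen ρ (n + 1) := mod_cast qDen_pos hirr hmem (n + 1)
  set j : ℤ := (-1) ^ n * r * qDen ρ n with hj
  lift j % qDen ρ (n + 1) to ℕ using Int.emod_nonneg j hq.ne' with i hi
  refine ⟨i, by zify; exact hi ▸ Int.emod_lt_of_pos j hq,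
    (-1) ^ n * r * pNum ρ n - j / qDen ρ (n + 1) * pNum ρ (n + 1), ?_⟩
  have hdiv := Int.emod_add_mul_ediv j (qDen ρ (n + 1))
  rw [← hi, hj] at hdiv
  linear_combination (pNum ρ (n + 1) : ℤ) * hdiv + r * hsq + (-1) ^ n * r * hdet

lemma exists_rotation_mem_Icc (hirr : Irrational ρ) (hmem : ρ ∈ Ioo (0 : ℝ) 1) (n : ℕ) (α : ℝ) :
    ∃ i < qDen ρ (n + 1), ∃ k : ℤ, α + i * ρ - k ∈ Icc 0 (4 * |cfError ρ n|) := by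
  set q := qDen ρ (n + 1) with hq
  set δ := |cfError ρ n|
  have hq₀ : (0 : ℝ) < q := mod_cast qDen_pos hirr hmem (n + 1)
  have hqδ : 1 ≤ 2 * (q * δ) := one_le_two_mul_qDen_mul_abs_cfError hirr hmem n
  obtain ⟨i, hi, k, hk⟩ := exists_natCast_mul_pNum_sub hirr hmem n ⌈-((α - δ) * q)⌉
  have hceil := Int.le_ceil (-((α - δ) * q))
  have hceil' := Int.ceil_lt_add_one (-((α - δ) * q))
  rw [← hk] at hceil hceil'
  push_cast [← hq] at hceil hceil'
  have hdrift : |i * cfError ρ (n + 1)| ≤ q * δ := by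
    rw [abs_mul, Nat.abs_cast]
    exact mul_le_mul (mod_cast hi.le) (abs_cfError_succ_lt hirr hmem n).le (abs_nonneg _) hq₀.le
  rw [abs_le, cfError, ← hq] at hdrift
  exact ⟨i, hi, k, by nlinarith, by nlinarith⟩

lemma exists_rotation_eq_mul_cfError (hirr : Irrational ρ) (hmem : ρ ∈ Ioo (0 : ℝ) 1) (n : ℕ)
    (α : ℝ) : ∃ i < qDen ρ (n + 1), ∃ k : ℤ, ∃ τ ∈ Icc (0 : ℝ) 4,
      α + i * ρ - k = τ * cfError ρ n := by
  suffices h : ∃ i < qDen ρ (n + 1), ∃ k : ℤ, (α + i * ρ - k) / cfError ρ n ∈ Icc (0 : ℝ) 4 by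
    obtain ⟨i, hi, k, hk⟩ := h
    exact ⟨i, hi, k, _, hk, (div_mul_cancel₀ _ (cfError_ne_zero hirr hmem n)).symm⟩
  rcases (cfError_ne_zero hirr hmem n).lt_or_gt with hneg | hpos
  · obtain ⟨i, hi, k, hk⟩ := exists_rotation_mem_Icc hirr hmem n (α + 4 * |cfError ρ n|)
    rw [abs_of_neg hneg] at hk
    refine ⟨i, hi, k, div_nonneg_of_nonpos (by linarith [hk.2]) hneg.le, ?_⟩
    rw [div_le_iff_of_neg hneg]
    linarith [hk.1]
  · obtain ⟨i, hi, k, hk⟩ := exists_rotation_mem_Icc hirr hmem n α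
    rw [abs_of_pos hpos] at hk
    exact ⟨i, hi, k, div_nonneg hk.1 hpos.le, (div_le_iff₀ hpos).mpr hk.2⟩

lemma eq_of_abs_rotation_sub_lt (hirr : Irrational ρ) (hmem : ρ ∈ Ioo (0 : ℝ) 1) (n : ℕ)
    {j j' : ℕ} {k k' : ℤ} (hj : j / qDen ρ (n + 1) = j' / qDen ρ (n + 1))
    (h : |(k - j * ρ) - (k' - j' * ρ)| < |cfError ρ n|) : j = j' ∧ k = k' := by
  have hq := qDen_pos hirr hmem (n + 1)
  have hlt : |(j : ℤ) - j'| < qDen ρ (n + 1) := by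
    have hdiv := Nat.div_add_mod j (qDen ρ (n + 1))
    have hdiv' := Nat.div_add_mod j' (qDen ρ (n + 1))
    have hmod := Nat.mod_lt j hq
    have hmod' := Nat.mod_lt j' hq
    rw [hj] at hdiv
    rw [abs_lt]
    omega
  by_contra hne
  have hbest := abs_cfError_le hirr hmem n (k := k - k') hlt (by omega)
  have hneg : |(k - j * ρ) - (k' - j' * ρ)| = |((j - j' : ℤ) : ℝ) * ρ - (k - k' : ℤ)| := by
    rw [← abs_neg]; congr 1; push_cast; ring
  exact (hneg ▸ h).not_ge hbest

lemma sum_card_rotation_le (hirr : Irrational ρ) (hmem : ρ ∈ Ioo (0 : ℝ) 1) {n i L w : ℕ}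
    (hi : i ≤ L * qDen ρ (n + 1)) {A : ℝ} {s : ℕ → Finset ℤ}
    (hs : ∀ j < i, ∀ k ∈ s j, (k - j * ρ - A : ℝ) ∈ Icc 0 (w * |cfError ρ n|)) :
    ∑ j ∈ Finset.range i, (s j).card ≤ L * (w + 1) := by
  set δ := |cfError ρ n|
  set q := qDen ρ (n + 1)
  have hδ : 0 < δ := abs_pos.mpr (cfError_ne_zero hirr hmem n)
  have hcard : L * (w + 1) = (Finset.range L ×ˢ Finset.range (w + 1)).card := by simp
  have hmemσ {x : (_ : ℕ) × ℤ} (hx : x ∈ (Finset.range i).sigma s) :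
      x.1 < i ∧ (x.2 - x.1 * ρ - A : ℝ) / δ ∈ Icc (0 : ℝ) w := by
    simp only [Finset.mem_sigma, Finset.mem_range] at hx
    obtain ⟨h₀, h₁⟩ := hs x.1 hx.1 x.2 hx.2
    exact ⟨hx.1, div_nonneg h₀ hδ.le, (div_le_iff₀ hδ).mpr h₁⟩
  rw [← Finset.card_sigma, hcard]
  refine Finset.card_le_card_of_injOn
    (fun x => (x.1 / q, ⌊(x.2 - x.1 * ρ - A : ℝ) / δ⌋₊)) (fun x hx => ?_) fun x hx y hy hxy => ?_
  · obtain ⟨hlt, -, hle⟩ := hmemσ hx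
    simp only [Finset.coe_product, Finset.coe_range, mem_prod, mem_Iio, Nat.lt_succ_iff]
    exact ⟨Nat.div_lt_of_lt_mul (by rw [mul_comm]; exact hlt.trans_le hi),
      Nat.floor_le_of_le hle⟩
  · obtain ⟨hblock, hcell⟩ := Prod.mk.inj hxy
    have hclose : |(x.2 - x.1 * ρ - A : ℝ) / δ - (y.2 - y.1 * ρ - A) / δ| < 1 := by
      refine Int.abs_sub_lt_one_of_floor_eq_floor ?_
      rw [← Int.natCast_floor_eq_floor (hmemσ hx).2.1, hcell,
        Int.natCast_floor_eq_floor (hmemσ hy).2.1]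
    rw [← sub_div, abs_div, abs_of_pos hδ, div_lt_one hδ, sub_sub_sub_cancel_right] at hclose
    obtain ⟨h₁, h₂⟩ := eq_of_abs_rotation_sub_lt hirr hmem n hblock hclose
    exact Sigma.ext h₁ (heq_of_eq h₂)

end ContinuedFraction

/-! ### Cross-ratios and negative Schwarzian derivative -/

/-- The cross-ratio `|L| |R| / (|L ∪ M| |M ∪ R|)` of the three consecutive intervals `L`, `M`, `R`
cut out by `a < b < c < d`. Absolute values make it independent of the orientation. -/
def crossRatio (a b c d : ℝ) : ℝ := |b - a| * |d - c| / (|c - a| * |d - b|)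

lemma crossRatio_reverse (a b c d : ℝ) : crossRatio d c b a = crossRatio a b c d := by
  simp only [crossRatio, abs_sub_comm c d, abs_sub_comm a b, abs_sub_comm b d, abs_sub_comm a c]
  ring

lemma crossRatio_nonneg (a b c d : ℝ) : 0 ≤ crossRatio a b c d := by
  unfold crossRatio; positivity

lemma crossRatio_of_lt {a b c d : ℝ} (hab : a < b) (hbc : b < c) (hcd : c < d) :
    crossRatio a b c d = (b - a) * (d - c) / ((c - a) * (d - b)) := by
  rw [crossRatio, abs_of_pos (sub_pos.mpr hab), abs_of_pos (sub_pos.mpr hcd),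
    abs_of_pos (sub_pos.mpr (hab.trans hbc)), abs_of_pos (sub_pos.mpr (hbc.trans hcd))]

section NegativeSchwarzian

lemma le_chord_of_convexOn {D : Set ℝ} {w : ℝ → ℝ} (hw : ConvexOn ℝ D w) {x y t : ℝ}
    (hx : x ∈ D) (hy : y ∈ D) (hxy : x < y) (ht : t ∈ Icc x y) :
    w t ≤ ((y - t) * w x + (t - x) * w y) / (y - x) := by
  have hyx : 0 < y - x := sub_pos.mpr hxy
  have h := hw.2 hx hy (div_nonneg (sub_nonneg.mpr ht.2) hyx.le)
    (div_nonneg (sub_nonneg.mpr ht.1) hyx.le) (by field_simp; ring)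
  have ht' : (y - t) / (y - x) * x + (t - x) / (y - x) * y = t := by field_simp; ring
  simp only [smul_eq_mul, ht'] at h
  exact h.trans_eq (by ring)

variable {D : Set ℝ} {F w : ℝ → ℝ}

/-- By convexity `w` lies below its chord `l`, so that `F' = 1 / w²` dominates `1 / l²`, whose
primitive is a Möbius map. -/
lemma sub_le_mul_mul_sub_of_convexOn (hw : ConvexOn ℝ D w) (hw₀ : ∀ t ∈ D, 0 < w t)
    (hF : ∀ t ∈ D, HasDerivAt F (w t ^ 2)⁻¹ t) {x y : ℝ} (hx : x ∈ D) (hy : y ∈ D) (hxy : x < y) :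
    y - x ≤ w x * w y * (F y - F x) := by
  have hyx : 0 < y - x := sub_pos.mpr hxy
  have hD : Icc x y ⊆ D := hw.1.ordConnected.out hx hy
  set l : ℝ → ℝ := fun t => ((y - t) * w x + (t - x) * w y) / (y - x) with hl
  have hwl : ∀ t ∈ Icc x y, w t ≤ l t := fun t ht => le_chord_of_convexOn hw hx hy hxy ht
  have hl₀ : ∀ t ∈ Icc x y, 0 < l t := fun t ht => (hw₀ t (hD ht)).trans_le (hwl t ht)
  have hx₀ := hw₀ x hx
  have hG : ∀ t ∈ Icc x y, HasDerivAt (fun t => F t - (t - x) / (w x * l t))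
      ((w t ^ 2)⁻¹ - (l t ^ 2)⁻¹) t := by
    intro t ht
    have ht₀ := hl₀ t ht
    have hl' : HasDerivAt l ((w y - w x) / (y - x)) t := by
      refine ((((hasDerivAt_id t).const_sub y).mul_const (w x)).add
        (((hasDerivAt_id t).sub_const x).mul_const (w y)) |>.div_const (y - x)).congr_deriv ?_
      ring
    refine ((hF t (hD ht)).sub (((hasDerivAt_id t).sub_const x).div (hl'.const_mul (w x))
      (by positivity))).congr_deriv ?_
    have hlt : l t * (y - x) = (y - t) * w x + (t - x) * w y := by
      simp only [hl]; field_simp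
    simp only [id_eq]
    field_simp
    linear_combination (-(1 : ℝ)) * hlt
  have hmono : MonotoneOn (fun t => F t - (t - x) / (w x * l t)) (Icc x y) := by
    refine monotoneOn_of_hasDerivWithinAt_nonneg (convex_Icc x y)
      (fun t ht => (hG t ht).continuousAt.continuousWithinAt)
      (fun t ht => (hG t (interior_subset ht)).hasDerivWithinAt) fun t ht => ?_
    replace ht := interior_subset ht
    have := hw₀ t (hD ht)
    have := hwl t ht
    rw [sub_nonneg]
    gcongr
  have hends := hmono (left_mem_Icc.mpr hxy.le) (right_mem_Icc.mpr hxy.le) hxy.le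
  have hly : l y = w y := by simp only [hl]; field_simp; ring
  have hy₀ := hw₀ y hy
  simp only [sub_self, zero_div, sub_zero, hly] at hends
  rw [← div_le_iff₀' (by positivity)]
  linarith

lemma strictMonoOn_of_hasDerivAt_inv_sq (hD : Convex ℝ D) (hw₀ : ∀ t ∈ D, 0 < w t)
    (hF : ∀ t ∈ D, HasDerivAt F (w t ^ 2)⁻¹ t) : StrictMonoOn F D :=
  strictMonoOn_of_hasDerivWithinAt_pos hD (fun t ht => (hF t ht).continuousAt.continuousWithinAt)
    (fun t ht => (hF t (interior_subset ht)).hasDerivWithinAt)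
    fun t ht => inv_pos.mpr (pow_pos (hw₀ t (interior_subset ht)) 2)

lemma monotoneOn_inv_mul_sub_sub_inv (hw : ConvexOn ℝ D w) (hw₀ : ∀ t ∈ D, 0 < w t)
    (hF : ∀ t ∈ D, HasDerivAt F (w t ^ 2)⁻¹ t) {x : ℝ} (hx : x ∈ D) :
    MonotoneOn (fun y => (w x ^ 2)⁻¹ / (F y - F x) - (y - x)⁻¹) (D ∩ Ioi x) := by
  have hmono := strictMonoOn_of_hasDerivAt_inv_sq hw.1 hw₀ hF
  have hderiv : ∀ y ∈ D ∩ Ioi x, HasDerivAt (fun y => (w x ^ 2)⁻¹ / (F y - F x) - (y - x)⁻¹)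
      (1 / (y - x) ^ 2 - (w x ^ 2)⁻¹ * (w y ^ 2)⁻¹ / (F y - F x) ^ 2) y := by
    rintro y ⟨hy, hxy⟩
    refine (((hasDerivAt_const y (w x ^ 2)⁻¹).div ((hF y hy).sub_const (F x))
      (sub_pos.mpr (hmono hx hy hxy)).ne').sub
      (((hasDerivAt_id y).sub_const x).inv (sub_pos.mpr hxy).ne')).congr_deriv ?_
    simp only [id_eq]
    ring
  refine monotoneOn_of_hasDerivWithinAt_nonneg (hw.1.inter (convex_Ioi x))
    (fun y hy => (hderiv y hy).continuousAt.continuousWithinAt)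
    (fun y hy => (hderiv y (interior_subset hy)).hasDerivWithinAt) fun y hy => ?_
  obtain ⟨hy, hxy⟩ := interior_subset hy
  have hyx : 0 < y - x := sub_pos.mpr hxy
  have := sub_pos.mpr (hmono hx hy hxy)
  have := hw₀ x hx
  have := hw₀ y hy
  have hkey := pow_le_pow_left₀ hyx.le (sub_le_mul_mul_sub_of_convexOn hw hw₀ hF hx hy hxy) 2
  rw [sub_nonneg, ← mul_inv, ← one_div, div_div, ← mul_pow, ← mul_pow]
  exact one_div_le_one_div_of_le (by positivity) hkey

lemma monotoneOn_log_sub_div_sub (hw : ConvexOn ℝ D w) (hw₀ : ∀ t ∈ D, 0 < w t)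
    (hF : ∀ t ∈ D, HasDerivAt F (w t ^ 2)⁻¹ t) {c d : ℝ} (hc : c ∈ D) (hd : d ∈ D) (hcd : c ≤ d) :
    MonotoneOn (fun x => Real.log ((F c - F x) / (c - x)) - Real.log ((F d - F x) / (d - x)))
      (D ∩ Iio c) := by
  have hmono := strictMonoOn_of_hasDerivAt_inv_sq hw.1 hw₀ hF
  have hderiv : ∀ y ∈ D, ∀ x ∈ D ∩ Iio y, HasDerivAt (fun x => Real.log ((F y - F x) / (y - x)))
      (-((w x ^ 2)⁻¹ / (F y - F x) - (y - x)⁻¹)) x := by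
    rintro y hy x ⟨hx, hxy⟩
    have hFyx := (sub_pos.mpr (hmono hx hy hxy)).ne'
    have hyx := (sub_pos.mpr (mem_Iio.mp hxy)).ne'
    refine ((((hF x hx).const_sub (F y)).div ((hasDerivAt_id x).const_sub y) hyx).log
      (div_ne_zero hFyx hyx)).congr_deriv ?_
    simp only [Pi.div_apply, id_eq]
    field_simp
    ring
  have hd' : ∀ x ∈ D ∩ Iio c, x ∈ D ∩ Iio d := fun x hx => ⟨hx.1, hx.2.trans_le hcd⟩
  refine monotoneOn_of_hasDerivWithinAt_nonneg (hw.1.inter (convex_Iio c))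
    (fun x hx => ((hderiv c hc x hx).sub
      (hderiv d hd x (hd' x hx))).continuousAt.continuousWithinAt)
    (fun x hx => ((hderiv c hc x (interior_subset hx)).sub
      (hderiv d hd x (hd' x (interior_subset hx)))).hasDerivWithinAt) fun x hx => ?_
  obtain ⟨hx, hxc⟩ := interior_subset hx
  have := monotoneOn_inv_mul_sub_sub_inv hw hw₀ hF hx ⟨hc, hxc⟩ ⟨hd, hxc.trans_le hcd⟩ hcd
  simp only at this
  linarith

lemma crossRatio_map_le_of_convexOn (hw : ConvexOn ℝ D w) (hw₀ : ∀ t ∈ D, 0 < w t)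
    (hF : ∀ t ∈ D, HasDerivAt F (w t ^ 2)⁻¹ t) {a b c d : ℝ} (ha : a ∈ D) (hd : d ∈ D)
    (hab : a < b) (hbc : b < c) (hcd : c < d) :
    crossRatio (F a) (F b) (F c) (F d) ≤ crossRatio a b c d := by
  have hD : Icc a d ⊆ D := hw.1.ordConnected.out ha hd
  have hb : b ∈ D := hD ⟨hab.le, (hbc.trans hcd).le⟩
  have hc : c ∈ D := hD ⟨(hab.trans hbc).le, hcd.le⟩
  have hmono := strictMonoOn_of_hasDerivAt_inv_sq hw.1 hw₀ hF
  have hFab := sub_pos.mpr (hmono ha hb hab)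
  have hFbc := sub_pos.mpr (hmono hb hc hbc)
  have hFcd := sub_pos.mpr (hmono hc hd hcd)
  have hFac : 0 < F c - F a := by linarith
  have hFbd : 0 < F d - F b := by linarith
  have hFad : 0 < F d - F a := by linarith
  have hac : 0 < c - a := by linarith
  have hbd : 0 < d - b := by linarith
  have had : 0 < d - a := by linarith
  replace hbc := sub_pos.mpr hbc
  have hlog := monotoneOn_log_sub_div_sub hw hw₀ hF hc hd hcd.le ⟨ha, sub_pos.mp hac⟩
    ⟨hb, sub_pos.mp hbc⟩ hab.le
  simp only at hlog
  rw [← Real.log_div (by positivity) (by positivity), ← Real.log_div (by positivity)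
    (by positivity), Real.log_le_log_iff (by positivity) (by positivity), div_div_div_eq,
    div_div_div_eq, div_le_div_iff₀ (by positivity) (by positivity)] at hlog
  rw [crossRatio_of_lt (sub_pos.mp hFab) (sub_pos.mp hFbc) (sub_pos.mp hFcd),
    crossRatio_of_lt hab (sub_pos.mp hbc) hcd, div_le_div_iff₀ (by positivity) (by positivity)]
  linear_combination hlog

end NegativeSchwarzian

/-- The second derivative of `1 / √F'` is `-(1/2) (1 / √F') SF`. -/
lemma convexOn_inv_sqrt_deriv {F : ℝ → ℝ} (hF : ContDiff ℝ 3 F) {α β : ℝ}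
    (hpos : ∀ t ∈ Ioo α β, 0 < deriv F t) (hS : ∀ t ∈ Ioo α β, schwarzianDeriv F t < 0) :
    ConvexOn ℝ (Ioo α β) fun t => (√(deriv F t))⁻¹ := by
  have hF' : ContDiff ℝ 2 (deriv F) :=
    (contDiff_succ_iff_deriv.mp (by norm_num; exact hF : ContDiff ℝ (2 + 1) F)).2.2
  have hF'' : ContDiff ℝ 1 (deriv (deriv F)) :=
    (contDiff_succ_iff_deriv.mp (by norm_num; exact hF' : ContDiff ℝ (1 + 1) (deriv F))).2.2
  set N : ℝ → ℝ := fun t => deriv (deriv F) t / deriv F t with hN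
  set v : ℝ → ℝ := fun t => (√(deriv F t))⁻¹ with hv
  have hF't : ∀ t, HasDerivAt (deriv F) (deriv (deriv F) t) t := fun t =>
    (hF'.differentiable two_ne_zero t).hasDerivAt
  have hNt : ∀ t ∈ Ioo α β, HasDerivAt N (deriv N t) t := fun t ht =>
    ((hF''.differentiable one_ne_zero t).div (hF't t).differentiableAt (hpos t ht).ne').hasDerivAt
  have hvt : ∀ t ∈ Ioo α β, HasDerivAt v (-(1 / 2) * (v t * N t)) t := by
    intro t ht
    have hpos := hpos t ht
    have hsqrt := Real.sqrt_pos.mpr hpos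
    refine (((hF't t).sqrt hpos.ne').inv hsqrt.ne').congr_deriv ?_
    simp only [hv, hN, Real.sq_sqrt hpos.le]
    field_simp
  refine convexOn_of_hasDerivWithinAt2_nonneg (convex_Ioo α β)
    (fun t ht => (hvt t ht).continuousAt.continuousWithinAt)
    (fun t ht => (hvt t (interior_subset ht)).hasDerivWithinAt)
    (fun t ht => (((hvt t (interior_subset ht)).mul
      (hNt t (interior_subset ht))).const_mul _).hasDerivWithinAt) fun t ht => ?_
  have hSt : deriv N t - 1 / 2 * N t ^ 2 < 0 := hS t (interior_subset ht)
  have hv₀ : 0 < v t := inv_pos.mpr (Real.sqrt_pos.mpr (hpos t (interior_subset ht)))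
  nlinarith

lemma crossRatio_map_le_of_schwarzianDeriv_neg {F : ℝ → ℝ} (hF : ContDiff ℝ 3 F) {α β : ℝ}
    (hpos : ∀ t ∈ Ioo α β, 0 < deriv F t) (hS : ∀ t ∈ Ioo α β, schwarzianDeriv F t < 0)
    {a b c d : ℝ} (ha : α < a) (hab : a < b) (hbc : b < c) (hcd : c < d) (hd : d < β) :
    crossRatio (F a) (F b) (F c) (F d) ≤ crossRatio a b c d := by
  refine crossRatio_map_le_of_convexOn (convexOn_inv_sqrt_deriv hF hpos hS)
    (fun t ht => inv_pos.mpr (Real.sqrt_pos.mpr (hpos t ht))) (fun t ht => ?_)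
    ⟨ha, by linarith⟩ ⟨by linarith, hd⟩ hab hbc hcd
  rw [inv_pow, inv_inv, Real.sq_sqrt (hpos t ht).le]
  exact (hF.differentiable (by norm_num) t).hasDerivAt

/-! ### Distortion estimates -/

lemma exists_uniform_of_local {Q : ℝ → ℝ → ℝ → Prop} (hmono : Monotone Q)
    (hper : ∀ K x y, ∀ k : ℤ, Q K x y → Q K (x + k) (y + k))
    (hloc : ∀ p, ∃ K, ∃ ε > 0, ∀ x ∈ Metric.ball p ε, ∀ y ∈ Metric.ball p ε, Q K x y) :
    ∃ K, ∃ δ > 0, ∀ x y, |y - x| < δ → Q K x y := by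
  obtain ⟨K, δ, hδ, h⟩ : ∃ K, ∃ δ > 0, ∀ x ∈ Icc (0 : ℝ) 1, ∀ y, |y - x| < δ → Q K x y := by
    refine isCompact_Icc.induction_on (p := fun S => ∃ K, ∃ δ > 0, ∀ x ∈ S, ∀ y, |y - x| < δ →
      Q K x y) ⟨0, 1, one_pos, by simp⟩
      (fun s t hst ⟨K, δ, hδ, h⟩ => ⟨K, δ, hδ, fun x hx => h x (hst hx)⟩) ?_ fun p _ => ?_
    · rintro s t ⟨K, δ, hδ, h⟩ ⟨K', δ', hδ', h'⟩
      refine ⟨max K K', min δ δ', lt_min hδ hδ', ?_⟩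
      rintro x (hx | hx) y hy
      · exact hmono (le_max_left _ _) _ _ (h x hx y (hy.trans_le (min_le_left _ _)))
      · exact hmono (le_max_right _ _) _ _ (h' x hx y (hy.trans_le (min_le_right _ _)))
    · obtain ⟨K, ε, hε, h⟩ := hloc p
      refine ⟨Metric.ball p (ε / 2), mem_nhdsWithin_of_mem_nhds (Metric.ball_mem_nhds p
        (half_pos hε)), K, ε / 2, half_pos hε, fun x hx y hy => ?_⟩
      refine h x (Metric.ball_subset_ball (half_le_self hε.le) hx) y ?_
      rw [Metric.mem_ball, Real.dist_eq] at hx ⊢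
      linarith [abs_sub_le y x p]
  refine ⟨K, δ, hδ, fun x y hxy => ?_⟩
  have := hper _ _ _ ⌊x⌋ (h (Int.fract x) ⟨Int.fract_nonneg x, (Int.fract_lt_one x).le⟩ (y - ⌊x⌋)
    (by rwa [Int.fract, sub_sub_sub_cancel_right]))
  simpa only [Int.fract_add_floor, sub_add_cancel] using this

lemma deriv_add_of_map_add {F : ℝ → ℝ} {k e : ℝ} (h : ∀ x, F (x + k) = F x + e) (x : ℝ) :
    deriv F (x + k) = deriv F x := by
  rw [← deriv_comp_add_const, funext h, deriv_add_const]

lemma schwarzianDeriv_add_of_map_add {F : ℝ → ℝ} {k e : ℝ} (h : ∀ x, F (x + k) = F x + e)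
    (x : ℝ) : schwarzianDeriv F (x + k) = schwarzianDeriv F x := by
  have h₁ := deriv_add_of_map_add h
  have h₂ : ∀ y, deriv (deriv F) (y + k) = deriv (deriv F) y :=
    deriv_add_of_map_add (e := 0) fun y => by rw [h₁, add_zero]
  rw [schwarzianDeriv, schwarzianDeriv, h₁, h₂,
    deriv_add_of_map_add (e := 0) fun y => by rw [h₁, h₂, add_zero]]

lemma exists_pos_mul_sub_le {F : ℝ → ℝ} (hF : Continuous F) (hmono : StrictMono F)
    (hF₁ : ∀ x, F (x + 1) = F x + 1) {δ : ℝ} (hδ : 0 < δ) :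
    ∃ c > 0, ∀ x y, δ ≤ y - x → c * (y - x) ≤ F y - F x := by
  have hper : Function.Periodic (fun x => F (x + δ) - F x) 1 := fun x => by
    simp only [add_right_comm x 1 δ, hF₁, add_sub_add_right_eq_sub]
  obtain ⟨_, ⟨x₀, rfl⟩, hmin⟩ := (hper.compact_of_continuous one_ne_zero
    (by fun_prop)).exists_isLeast (range_nonempty _)
  set m := F (x₀ + δ) - F x₀
  have hm : 0 < m := sub_pos.mpr (hmono (lt_add_of_pos_right x₀ hδ))
  have hstep : ∀ (n : ℕ) x, n * m ≤ F (x + n * δ) - F x := by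
    intro n x
    induction n with
    | zero => simp
    | succ n ih =>
      have := hmin (mem_range_self (x + n * δ))
      push_cast
      rw [add_one_mul (n : ℝ) δ, ← add_assoc]
      linarith
  refine ⟨m / (2 * δ), by positivity, fun x y hxy => ?_⟩
  have hn₁ : 1 ≤ ⌊(y - x) / δ⌋₊ := Nat.le_floor (by simpa [le_div_iff₀ hδ] using hxy)
  have hn₂ := (le_div_iff₀ hδ).mp
    (Nat.floor_le (div_nonneg (hδ.le.trans hxy) hδ.le) : (⌊(y - x) / δ⌋₊ : ℝ) ≤ (y - x) / δ)
  have hn₃ := (div_lt_iff₀ hδ).mp (Nat.lt_floor_add_one ((y - x) / δ))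
  generalize ⌊(y - x) / δ⌋₊ = n at hn₁ hn₂ hn₃
  have hn₄ : (1 : ℝ) ≤ n := mod_cast hn₁
  calc m / (2 * δ) * (y - x) ≤ m / (2 * δ) * (2 * n * δ) := by gcongr; nlinarith
    _ = n * m := by field_simp
    _ ≤ F (x + n * δ) - F x := hstep n x
    _ ≤ F y - F x := by gcongr; exact hmono.monotone (by linarith)

section PowerLaw

variable {F : ℝ → ℝ} {κ e p x y : ℝ}

lemma exists_quarter_half_le_abs_sub (hxy : x < y) (p : ℝ) : ∃ u v, x ≤ u ∧ v ≤ y ∧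
    v - u = (y - x) / 4 ∧ ∀ t ∈ Icc u v, max |x - p| |y - p| / 2 ≤ |t - p| := by
  rcases le_total |x - p| |y - p| with h | h
  · have hyp : 0 ≤ y - p := by
      by_contra! hyp
      rw [abs_of_neg hyp, abs_of_neg (by linarith)] at h
      linarith
    rw [abs_of_nonneg hyp] at h
    refine ⟨(x + 3 * y) / 4, y, by linarith, le_rfl, by ring, fun t ht => ?_⟩
    rw [abs_of_nonneg hyp, max_eq_right h]
    exact (by linarith [ht.1, (abs_le.mp h).1] : (y - p) / 2 ≤ t - p).trans (le_abs_self _)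
  · have hxp : x - p ≤ 0 := by
      by_contra! hxp
      rw [abs_of_pos hxp, abs_of_pos (by linarith)] at h
      linarith
    rw [abs_of_nonpos hxp] at h
    refine ⟨x, (3 * x + y) / 4, le_rfl, by linarith, by ring, fun t ht => ?_⟩
    rw [abs_of_nonpos hxp, max_eq_left h]
    exact (by linarith [ht.2, (abs_le.mp h).2] : -(x - p) / 2 ≤ -(t - p)).trans (neg_le_abs _)

lemma mul_rpow_mul_sub_le_of_le_deriv (hF : Differentiable ℝ F) (hmono : Monotone F) (hκ : 0 ≤ κ)
    (he : 0 ≤ e) (hxy : x < y) (h : ∀ t ∈ Icc x y, κ * |t - p| ^ e ≤ deriv F t) :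
    κ * (max |x - p| |y - p| / 2) ^ e * (y - x) ≤ 4 * (F y - F x) := by
  obtain ⟨u, v, hxu, hvy, huv, hfar⟩ := exists_quarter_half_le_abs_sub hxy p
  have huv' : u ≤ v := by linarith
  have hsub : Icc u v ⊆ Icc x y := Icc_subset_Icc hxu hvy
  have := (convex_Icc u v).mul_sub_le_image_sub_of_le_deriv hF.continuous.continuousOn
    hF.differentiableOn (C := κ * (max |x - p| |y - p| / 2) ^ e) (fun t ht => by
      have ht := interior_subset ht
      refine le_trans ?_ (h t (hsub ht))
      gcongr
      exact hfar t ht) u (left_mem_Icc.mpr huv') v (right_mem_Icc.mpr huv') huv'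
  rw [huv] at this
  linarith [hmono hxu, hmono hvy]

lemma sub_le_mul_rpow_mul_sub_of_deriv_le (hF : Differentiable ℝ F) (hκ : 0 ≤ κ) (he : 0 ≤ e)
    (hxy : x ≤ y) (h : ∀ t ∈ Icc x y, deriv F t ≤ κ * |t - p| ^ e) :
    F y - F x ≤ κ * max |x - p| |y - p| ^ e * (y - x) := by
  refine (convex_Icc x y).image_sub_le_mul_sub_of_deriv_le hF.continuous.continuousOn
    hF.differentiableOn (fun t ht => ?_) x (left_mem_Icc.mpr hxy) y (right_mem_Icc.mpr hxy) hxy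
  obtain ⟨hxt, hty⟩ := interior_subset ht
  refine (h t ⟨hxt, hty⟩).trans ?_
  gcongr
  exact abs_le_max_abs_abs (by linarith) (by linarith)

end PowerLaw

section CrossRatio

variable {a b c d : ℝ}

lemma crossRatio_le_sq_mul {K : ℝ} (hK : 0 ≤ K) {a' b' c' d' : ℝ} (hab : a < b) (hbc : b < c)
    (hcd : c < d) (hab' : a' < b') (hbc' : b' < c') (hcd' : c' < d')
    (hL : (b' - a') * (c - a) ≤ K * ((c' - a') * (b - a)))
    (hR : (d' - c') * (d - b) ≤ K * ((d' - b') * (d - c))) :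
    crossRatio a' b' c' d' ≤ K ^ 2 * crossRatio a b c d := by
  have hac : 0 < c - a := sub_pos.mpr (hab.trans hbc)
  have hbd : 0 < d - b := sub_pos.mpr (hbc.trans hcd)
  have hac' : 0 < c' - a' := sub_pos.mpr (hab'.trans hbc')
  have hbd' : 0 < d' - b' := sub_pos.mpr (hbc'.trans hcd')
  have := sub_pos.mpr hab
  have := sub_pos.mpr hcd'
  rw [crossRatio_of_lt hab hbc hcd, crossRatio_of_lt hab' hbc' hcd', ← mul_div_assoc,
    div_le_div_iff₀ (by positivity) (by positivity)]
  linear_combination mul_le_mul hL hR (by positivity) (by positivity)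

lemma crossRatio_map_le_of_deriv_le {F : ℝ → ℝ} (hF : Differentiable ℝ F) (hmono : StrictMono F)
    {E : ℝ} (hE : 0 ≤ E) (hab : a < b) (hbc : b < c) (hcd : c < d)
    (h : ∀ s ∈ Icc a d, ∀ t ∈ Icc a d, deriv F s ≤ E * deriv F t) :
    crossRatio (F a) (F b) (F c) (F d) ≤ E ^ 2 * crossRatio a b c d := by
  have key : ∀ x y x' y', a ≤ x → y ≤ d → a ≤ x' → y' ≤ d → x < y → x' < y' →
      (F y - F x) * (y' - x') ≤ E * ((F y' - F x') * (y - x)) := by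
    intro x y x' y' hx hy hx' hy' hxy hxy'
    obtain ⟨s, hs, hs'⟩ := exists_deriv_eq_slope F hxy hF.continuous.continuousOn
      hF.differentiableOn
    obtain ⟨t, ht, ht'⟩ := exists_deriv_eq_slope F hxy' hF.continuous.continuousOn
      hF.differentiableOn
    have := h s ⟨hx.trans hs.1.le, hs.2.le.trans hy⟩ t ⟨hx'.trans ht.1.le, ht.2.le.trans hy'⟩
    rw [hs', ht', ← mul_div_assoc, div_le_div_iff₀ (sub_pos.mpr hxy) (sub_pos.mpr hxy')] at this
    linarith
  exact crossRatio_le_sq_mul hE hab hbc hcd (hmono hab) (hmono hbc) (hmono hcd)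
    (key a b a c le_rfl (by linarith) le_rfl hcd.le hab (hab.trans hbc))
    (key c d b d (by linarith) le_rfl hab.le le_rfl hcd (hbc.trans hcd))

lemma crossRatio_add (k : ℝ) :
    crossRatio (a + k) (b + k) (c + k) (d + k) = crossRatio a b c d := by
  simp only [crossRatio, add_sub_add_right_eq_sub]

end CrossRatio

namespace MCM

variable (f : MCM)

lemma differentiable : Differentiable ℝ f.F := f.smooth.differentiable (by norm_num)

lemma continuous : Continuous f.F := f.smooth.continuous

lemma contDiff_deriv : ContDiff ℝ 2 (deriv f.F) :=
  (contDiff_succ_iff_deriv.mp (by norm_num; exact f.smooth : ContDiff ℝ (2 + 1) f.F)).2.2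

lemma deriv_nonneg (x : ℝ) : 0 ≤ deriv f.F x := f.mono.monotone.deriv_nonneg

lemma F_add_int (x : ℝ) (k : ℤ) : f.F (x + k) = f.F x + k :=
  CircleDeg1Lift.map_add_int ⟨⟨f.F, f.mono.monotone⟩, f.deg1⟩ x k

lemma deriv_add_int (x : ℝ) (k : ℤ) : deriv f.F (x + k) = deriv f.F x :=
  deriv_add_of_map_add (fun y => f.F_add_int y k) x

lemma exists_deriv_eq_slope {x y : ℝ} (h : x < y) :
    ∃ t ∈ Ioo x y, f.F y - f.F x = deriv f.F t * (y - x) := by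
  obtain ⟨t, ht, hslope⟩ := _root_.exists_deriv_eq_slope f.F h f.continuous.continuousOn
    f.differentiable.differentiableOn
  exact ⟨t, ht, by rw [hslope, div_mul_cancel₀ _ (sub_pos.mpr h).ne']⟩

lemma exists_normal_form {p : ℝ} (hp : deriv f.F p = 0) :
    ∃ e > (0 : ℝ), ∃ α > 0, ∃ β > 0, ∃ ε > 0, ∀ x ∈ Metric.ball p ε,
      deriv f.F x ∈ Icc (α * |x - p| ^ e) (β * |x - p| ^ e) ∧
        (x ≠ p → schwarzianDeriv f.F x < 0) := by
  obtain ⟨i, k, rfl⟩ := f.critOnly p hp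
  obtain ⟨ε, hε, hW⟩ := Metric.isOpen_iff.mp (f.W_open i) _ (f.c_mem_W i)
  have hs : 0 < f.s i - 1 := sub_pos.mpr (f.s_gt_one i)
  refine ⟨f.s i - 1, hs, f.al i, f.al_pos i, f.be i, (f.al_pos i).trans (f.al_lt_be i), ε, hε,
    fun x hx => ?_⟩
  obtain ⟨z, rfl⟩ : ∃ z, x = z + k := ⟨x - k, (sub_add_cancel x _).symm⟩
  have hz : z ∈ f.W i := hW (by
    rwa [Metric.mem_ball, Real.dist_eq, add_sub_add_right_eq_sub] at hx)
  rw [add_sub_add_right_eq_sub, f.deriv_add_int,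
    schwarzianDeriv_add_of_map_add (fun y => f.F_add_int y k)]
  refine ⟨?_, fun hne => f.negSchwarzian i z hz fun h => hne (by rw [h])⟩
  rcases eq_or_ne z (f.c i) with rfl | hzc
  · simp [f.isCrit, Real.zero_rpow hs.ne']
  · exact ⟨(f.powerLaw i z hz hzc).1.le, (f.powerLaw i z hz hzc).2.le⟩

lemma exists_deriv_mul_sub_le_near (p : ℝ) : ∃ K, ∃ ε > 0, ∀ x ∈ Metric.ball p ε,
    ∀ y ∈ Metric.ball p ε, ∀ t ∈ Icc x y, deriv f.F t * (y - x) ≤ K * (f.F y - f.F x) := by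
  rcases (f.deriv_nonneg p).eq_or_lt' with hp | hp
  · obtain ⟨e, he, α, hα, β, hβ, ε, hε, h⟩ := f.exists_normal_form hp
    refine ⟨4 * 2 ^ e * β / α, ε, hε, fun x hx y hy t ht => ?_⟩
    have hball : Icc x y ⊆ Metric.ball p ε := (convex_ball p ε).ordConnected.out hx hy
    rcases (ht.1.trans ht.2).eq_or_lt with rfl | hxy
    · simp
    have hlow := mul_rpow_mul_sub_le_of_le_deriv f.differentiable f.mono.monotone hα.le he.le hxy
      fun z hz => (h z (hball hz)).1.1
    have htp : |t - p| ≤ max |x - p| |y - p| :=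
      abs_le_max_abs_abs (by linarith [ht.1]) (by linarith [ht.2])
    set r := max |x - p| |y - p|
    have := sub_pos.mpr hxy
    have hr : 0 ≤ r := (abs_nonneg _).trans htp
    calc deriv f.F t * (y - x) ≤ β * |t - p| ^ e * (y - x) := by gcongr; exact (h t (hball ht)).1.2
      _ ≤ β * r ^ e * (y - x) := by gcongr
      _ = 2 ^ e * β / α * (α * (r / 2) ^ e * (y - x)) := by
        rw [Real.div_rpow hr zero_le_two]; field_simp
      _ ≤ 2 ^ e * β / α * (4 * (f.F y - f.F x)) := by gcongr
      _ = 4 * 2 ^ e * β / α * (f.F y - f.F x) := by ring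
  · obtain ⟨ε, hε, h⟩ := Metric.eventually_nhds_iff_ball.mp
      (f.contDiff_deriv.continuous.continuousAt.eventually
        (Ioo_mem_nhds (half_lt_self hp) (lt_two_mul_self hp)))
    refine ⟨4, ε, hε, fun x hx y hy t ht => ?_⟩
    have hball : Icc x y ⊆ Metric.ball p ε := (convex_ball p ε).ordConnected.out hx hy
    have hxy : x ≤ y := ht.1.trans ht.2
    have hlow := (convex_Icc x y).mul_sub_le_image_sub_of_le_deriv f.continuous.continuousOn
      f.differentiable.differentiableOn (fun z hz => (h z (hball (interior_subset hz))).1.le)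
      x (left_mem_Icc.mpr hxy) y (right_mem_Icc.mpr hxy) hxy
    have := mul_le_mul_of_nonneg_right (h t (hball ht)).2.le (sub_nonneg.mpr hxy)
    linarith

lemma exists_deriv_mul_sub_le : ∃ K, 0 ≤ K ∧ ∀ x y, ∀ t ∈ Icc x y,
    deriv f.F t * (y - x) ≤ K * (f.F y - f.F x) := by
  obtain ⟨K, δ, hδ, h⟩ := exists_uniform_of_local
    (Q := fun K x y => ∀ t ∈ Icc x y, deriv f.F t * (y - x) ≤ K * (f.F y - f.F x))
    (fun K K' hK x y h t ht => (h t ht).trans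
      (mul_le_mul_of_nonneg_right hK (sub_nonneg.mpr (f.mono.monotone (ht.1.trans ht.2)))))
    (fun K x y k h t ht => by
      have := h (t - k) ⟨by linarith [ht.1], by linarith [ht.2]⟩
      rwa [← f.deriv_add_int _ k, sub_add_cancel, ← add_sub_add_right_eq_sub y x k,
        ← add_sub_add_right_eq_sub (f.F y) _ k, ← f.F_add_int, ← f.F_add_int] at this)
    f.exists_deriv_mul_sub_le_near
  have hper : Function.Periodic (deriv f.F) 1 := fun x => mod_cast f.deriv_add_int x 1
  obtain ⟨M, hM⟩ := (hper.compact_of_continuous one_ne_zero f.contDiff_deriv.continuous).bddAbove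
  rw [mem_upperBounds, forall_mem_range] at hM
  have hM₀ : 0 ≤ M := (f.deriv_nonneg 0).trans (hM 0)
  obtain ⟨c, hc, hlow⟩ := exists_pos_mul_sub_le f.continuous f.mono f.deg1 hδ
  refine ⟨max K (M / c), le_max_of_le_right (by positivity), fun x y t ht => ?_⟩
  have hxy : x ≤ y := ht.1.trans ht.2
  have hFxy : 0 ≤ f.F y - f.F x := sub_nonneg.mpr (f.mono.monotone hxy)
  rcases lt_or_ge (y - x) δ with hlt | hge
  · refine (h x y (by rwa [abs_of_nonneg (sub_nonneg.mpr hxy)]) t ht).trans ?_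
    gcongr
    exact le_max_left _ _
  · calc deriv f.F t * (y - x) ≤ M / c * (c * (y - x)) := by
          rw [div_mul_eq_mul_div, mul_left_comm, mul_div_cancel_left₀ _ hc.ne']
          gcongr
          exact hM t
      _ ≤ max K (M / c) * (f.F y - f.F x) := by
          gcongr
          · exact le_max_right _ _
          · exact hlow x y hge

lemma exists_crossRatio_map_le : ∃ K, ∀ a b c d, a < b → b < c → c < d →
    crossRatio (f.F a) (f.F b) (f.F c) (f.F d) ≤ K ^ 2 * crossRatio a b c d := by
  obtain ⟨K, hK, h⟩ := f.exists_deriv_mul_sub_le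
  have key : ∀ x y z w, x ≤ z → w ≤ y → z < w →
      (f.F w - f.F z) * (y - x) ≤ K * ((f.F y - f.F x) * (w - z)) := by
    intro x y z w hxz hwy hzw
    obtain ⟨t, ht, hslope⟩ := f.exists_deriv_eq_slope hzw
    have := mul_le_mul_of_nonneg_right (h x y t ⟨hxz.trans ht.1.le, ht.2.le.trans hwy⟩)
      (sub_nonneg.mpr hzw.le)
    rw [hslope]
    linarith
  exact ⟨K, fun a b c d hab hbc hcd => crossRatio_le_sq_mul hK hab hbc hcd (f.mono hab)
    (f.mono hbc) (f.mono hcd) (key a c a b le_rfl hbc.le hab) (key b d c d hbc.le le_rfl hcd)⟩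

lemma exists_crossRatio_map_le_near_critical {p : ℝ} (hp : deriv f.F p = 0) :
    ∃ ε > 0, ∀ a ∈ Metric.ball p ε, ∀ d ∈ Metric.ball p ε, p ∉ Icc a d →
      ∀ b c, a < b → b < c → c < d →
        crossRatio (f.F a) (f.F b) (f.F c) (f.F d) ≤ crossRatio a b c d := by
  obtain ⟨e, -, α, hα, β, -, ε, hε, h⟩ := f.exists_normal_form hp
  have hpos : ∀ t ∈ Metric.ball p ε, t ≠ p → 0 < deriv f.F t := fun t ht hne =>
    lt_of_lt_of_le (by have := abs_pos.mpr (sub_ne_zero.mpr hne); positivity) (h t ht).1.1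
  refine ⟨ε, hε, fun a ha d hd hpad b c hab hbc hcd => ?_⟩
  rw [Real.ball_eq_Ioo] at h hpos ha hd
  rcases lt_or_ge p a with hlt | hge
  · have hsub : Ioo p (p + ε) ⊆ Ioo (p - ε) (p + ε) := Ioo_subset_Ioo_left (by linarith)
    exact crossRatio_map_le_of_schwarzianDeriv_neg f.smooth
      (fun t ht => hpos t (hsub ht) ht.1.ne') (fun t ht => (h t (hsub ht)).2 ht.1.ne')
      hlt hab hbc hcd hd.2
  · have hdp : d < p := lt_of_not_ge fun h => hpad ⟨hge, h⟩
    have hsub : Ioo (p - ε) p ⊆ Ioo (p - ε) (p + ε) := Ioo_subset_Ioo_right (by linarith)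
    exact crossRatio_map_le_of_schwarzianDeriv_neg f.smooth
      (fun t ht => hpos t (hsub ht) ht.2.ne) (fun t ht => (h t (hsub ht)).2 ht.2.ne)
      ha.1 hab hbc hcd hdp

lemma exists_deriv_le_exp_mul_near {p : ℝ} (hp : deriv f.F p ≠ 0) :
    ∃ K : ℝ, ∃ ε > 0, ∀ a ∈ Metric.ball p ε, ∀ d ∈ Metric.ball p ε, ∀ s ∈ Icc a d,
      ∀ t ∈ Icc a d, deriv f.F s ≤ Real.exp (K * (d - a)) * deriv f.F t := by
  obtain ⟨K, U, hU, hlip⟩ := (((f.contDiff_deriv.of_le one_le_two).contDiffAt (x := p)).log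
    hp).exists_lipschitzOnWith
  have hpos : ∀ᶠ t in nhds p, 0 < deriv f.F t :=
    f.contDiff_deriv.continuous.continuousAt.eventually
      (lt_mem_nhds ((f.deriv_nonneg p).lt_of_ne' hp))
  obtain ⟨ε, hε, hball⟩ := Metric.eventually_nhds_iff_ball.mp (hpos.and hU)
  refine ⟨K, ε, hε, fun a ha d hd s hs t ht => ?_⟩
  have hsub : Icc a d ⊆ Metric.ball p ε := (convex_ball p ε).ordConnected.out ha hd
  have hst : |s - t| ≤ d - a :=
    abs_le.mpr ⟨by linarith [hs.1, ht.2], by linarith [hs.2, ht.1]⟩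
  have hlog := (le_abs_self _).trans ((hlip.dist_le_mul s (hball s (hsub hs)).2 t
    (hball t (hsub ht)).2).trans (mul_le_mul_of_nonneg_left hst K.2))
  rw [sub_le_iff_le_add] at hlog
  have := Real.exp_le_exp.mpr hlog
  rwa [Real.exp_add, Real.exp_log (hball s (hsub hs)).1, Real.exp_log (hball t (hsub ht)).1]
    at this

lemma exists_crossRatio_map_le_exp_near (p : ℝ) : ∃ L, ∃ ε > 0, ∀ a ∈ Metric.ball p ε,
    ∀ d ∈ Metric.ball p ε, (∀ t ∈ Icc a d, deriv f.F t ≠ 0) → ∀ b c, a < b → b < c → c < d →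
      crossRatio (f.F a) (f.F b) (f.F c) (f.F d) ≤
        Real.exp (L * (d - a)) * crossRatio a b c d := by
  rcases eq_or_ne (deriv f.F p) 0 with hp | hp
  · obtain ⟨ε, hε, h⟩ := f.exists_crossRatio_map_le_near_critical hp
    exact ⟨0, ε, hε, fun a ha d hd hne b c hab hbc hcd => by
      simpa using h a ha d hd (fun hp' => hne p hp' hp) b c hab hbc hcd⟩
  · obtain ⟨K, ε, hε, h⟩ := f.exists_deriv_le_exp_mul_near hp
    refine ⟨2 * K, ε, hε, fun a ha d hd _ b c hab hbc hcd => ?_⟩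
    have hsq : Real.exp (2 * K * (d - a)) = Real.exp (K * (d - a)) ^ 2 := by
      rw [← Real.exp_nat_mul]; push_cast; ring_nf
    rw [hsq]
    exact crossRatio_map_le_of_deriv_le f.differentiable f.mono (Real.exp_pos _).le hab hbc hcd
      (h a ha d hd)

/-- The number of translates of the critical points lying in `[a, d]`. -/
def critCount (a d : ℝ) : ℕ := ∑ i, (Finset.Icc ⌈a - f.c i⌉ ⌊d - f.c i⌋).card

lemma one_le_critCount {a d t : ℝ} (ht : t ∈ Icc a d) (htc : deriv f.F t = 0) :
    1 ≤ f.critCount a d := by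
  obtain ⟨i, k, rfl⟩ := f.critOnly t htc
  refine le_trans (Finset.card_pos.mpr ⟨k, Finset.mem_Icc.mpr ⟨Int.ceil_le.mpr ?_,
    Int.le_floor.mpr ?_⟩⟩) (Finset.single_le_sum
      (f := fun i => (Finset.Icc ⌈a - f.c i⌉ ⌊d - f.c i⌋).card)
      (fun _ _ => Nat.zero_le _) (Finset.mem_univ i))
  · linarith [ht.1]
  · linarith [ht.2]

lemma exists_crossRatio_map_le_exp_of_lt : ∃ L, ∃ δ > 0, ∀ a b c d, a < b → b < c → c < d →
    d - a < δ → (∀ t ∈ Icc a d, deriv f.F t ≠ 0) →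
      crossRatio (f.F a) (f.F b) (f.F c) (f.F d) ≤
        Real.exp (L * (d - a)) * crossRatio a b c d := by
  obtain ⟨L, δ, hδ, h⟩ := exists_uniform_of_local
    (Q := fun L a d => (∀ t ∈ Icc a d, deriv f.F t ≠ 0) → ∀ b c, a < b → b < c → c < d →
      crossRatio (f.F a) (f.F b) (f.F c) (f.F d) ≤
        Real.exp (L * (d - a)) * crossRatio a b c d)
    (fun L L' hL a d h hne b c hab hbc hcd => (h hne b c hab hbc hcd).trans (by
      have : 0 ≤ d - a := by linarith
      have := crossRatio_nonneg a b c d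
      gcongr))
    (fun L a d k h hne b c hab hbc hcd => by
      obtain ⟨b, rfl⟩ : ∃ b', b = b' + k := ⟨b - k, (sub_add_cancel b _).symm⟩
      obtain ⟨c, rfl⟩ : ∃ c', c = c' + k := ⟨c - k, (sub_add_cancel c _).symm⟩
      simp only [f.F_add_int, crossRatio_add, add_sub_add_right_eq_sub, add_lt_add_iff_right]
        at hab hbc hcd ⊢
      exact h (fun t ht => f.deriv_add_int t k ▸ hne _ ⟨by linarith [ht.1], by linarith [ht.2]⟩)
        b c hab hbc hcd)
    f.exists_crossRatio_map_le_exp_near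
  exact ⟨L, δ, hδ, fun a b c d hab hbc hcd hda hne => h a d
    (by rwa [abs_of_pos (by linarith)]) hne b c hab hbc hcd⟩

lemma exists_crossRatio_map_le_exp : ∃ κ, 0 ≤ κ ∧ ∀ a b c d, a < b → b < c → c < d →
    crossRatio (f.F a) (f.F b) (f.F c) (f.F d) ≤
      Real.exp (κ * ((d - a) + f.critCount a d)) * crossRatio a b c d := by
  obtain ⟨K, hglob⟩ := f.exists_crossRatio_map_le
  obtain ⟨L, δ, hδ, hloc⟩ := f.exists_crossRatio_map_le_exp_of_lt
  refine ⟨max |L| (K ^ 2 * (1 + 1 / δ)), by positivity, fun a b c d hab hbc hcd => ?_⟩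
  have hda : 0 < d - a := by linarith
  set s : ℝ := (d - a) + f.critCount a d
  have : (0 : ℝ) ≤ f.critCount a d := Nat.cast_nonneg _
  by_cases h : d - a < δ ∧ ∀ t ∈ Icc a d, deriv f.F t ≠ 0
  · refine (hloc a b c d hab hbc hcd h.1 h.2).trans (mul_le_mul_of_nonneg_right
      (Real.exp_le_exp.mpr ?_) (crossRatio_nonneg _ _ _ _))
    calc L * (d - a) ≤ |L| * s :=
          mul_le_mul (le_abs_self L) (by linarith) hda.le (abs_nonneg L)
      _ ≤ _ := by gcongr; exact le_max_left _ _
  · have hs₁ : 1 ≤ (1 + 1 / δ) * s := by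
      by_cases hlt : d - a < δ
      · push Not at h
        obtain ⟨t, ht, htc⟩ := h hlt
        have h₁ : (1 : ℝ) ≤ f.critCount a d := mod_cast f.one_le_critCount ht htc
        have : 0 ≤ 1 / δ * s := by positivity
        linarith
      · have h₁ : 1 ≤ 1 / δ * (d - a) := by rw [one_div_mul_eq_div, le_div_iff₀ hδ]; linarith
        have : 0 ≤ 1 / δ * f.critCount a d := by positivity
        have : 0 ≤ s := by positivity
        linarith
    refine (hglob a b c d hab hbc hcd).trans (mul_le_mul_of_nonneg_right ?_
      (crossRatio_nonneg _ _ _ _))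
    calc K ^ 2 ≤ K ^ 2 * ((1 + 1 / δ) * s) := le_mul_of_one_le_right (by positivity) hs₁
      _ ≤ max |L| (K ^ 2 * (1 + 1 / δ)) * s := by
          rw [← mul_assoc]; gcongr; exact le_max_right _ _
      _ ≤ _ := by linarith [Real.add_one_le_exp (max |L| (K ^ 2 * (1 + 1 / δ)) * s)]

end MCM

/-! ### The cross-ratio inequality -/

lemma intervalIntegrable_fract_sub (x : ℝ) :
    IntervalIntegrable (fun t => Int.fract (x - t)) volume 0 1 :=
  (intervalIntegrable_const (c := (1 : ℝ))).mono_fun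
    (measurable_fract.comp (measurable_const.sub measurable_id)).aestronglyMeasurable
    (Eventually.of_forall fun t => by
      simpa [abs_of_nonneg (Int.fract_nonneg (x - t))] using (Int.fract_lt_one (x - t)).le)

lemma integral_fract_sub (x : ℝ) :
    ∫ t in (0 : ℝ)..1, Int.fract (x - t) = ∫ t in (0 : ℝ)..1, Int.fract t := by
  have hper : Function.Periodic (Int.fract : ℝ → ℝ) 1 := Int.fract_add_one
  have := hper.intervalIntegral_add_eq (x - 1) 0
  simp only [zero_add, sub_add_cancel] at this
  rw [← this]
  simp [intervalIntegral.integral_comp_sub_left Int.fract x]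

lemma sub_add_fract_sub_fract_le_card (x y : ℝ) :
    y - x + (Int.fract x - Int.fract y) ≤ (Finset.Icc ⌈x⌉ ⌊y⌋).card := by
  have h₁ : ((⌊y⌋ + 1 - ⌈x⌉ : ℤ) : ℝ) ≤ (⌊y⌋ + 1 - ⌈x⌉).toNat := mod_cast Int.self_le_toNat _
  have h₂ : (⌈x⌉ : ℝ) ≤ ⌊x⌋ + 1 := mod_cast Int.ceil_le_floor_add_one x
  rw [Int.card_Icc]
  push_cast at h₁
  linarith [Int.floor_add_fract x, Int.floor_add_fract y]

/-- The lengths are averaged over the translates `t ∈ [0, 1]`; the fractional parts average out. -/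
lemma sum_sub_le_of_sum_card_le {ι : Type*} {s : Finset ι} {x y : ι → ℝ} {m : ℝ}
    (hm : ∀ t : ℝ, ∑ j ∈ s, ((Finset.Icc ⌈x j - t⌉ ⌊y j - t⌋).card : ℝ) ≤ m) :
    ∑ j ∈ s, (y j - x j) ≤ m := by
  set g : ι → ℝ → ℝ := fun j t => y j - x j + (Int.fract (x j - t) - Int.fract (y j - t)) with hg
  have hfract : ∀ j, IntervalIntegrable (fun t => Int.fract (x j - t) - Int.fract (y j - t))
      volume 0 1 := fun j =>
    (intervalIntegrable_fract_sub _).sub (intervalIntegrable_fract_sub _)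
  have hgi : ∀ j ∈ s, IntervalIntegrable (g j) volume 0 1 := fun j _ =>
    intervalIntegrable_const.add (hfract j)
  have hg₁ : ∀ j, ∫ t in (0 : ℝ)..1, g j t = y j - x j := fun j => by
    rw [hg, intervalIntegral.integral_add intervalIntegrable_const (hfract j),
      intervalIntegral.integral_sub (intervalIntegrable_fract_sub _)
        (intervalIntegrable_fract_sub _), integral_fract_sub, integral_fract_sub]
    simp
  calc ∑ j ∈ s, (y j - x j) = ∫ t in (0 : ℝ)..1, (∑ j ∈ s, g j) t := by
        simp only [Finset.sum_apply, intervalIntegral.integral_finsetSum hgi, hg₁]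
    _ ≤ ∫ _ in (0 : ℝ)..1, m := by
        refine intervalIntegral.integral_mono_on zero_le_one (IntervalIntegrable.sum s hgi)
          intervalIntegrable_const fun t _ => ?_
        rw [Finset.sum_apply]
        refine le_trans (Finset.sum_le_sum fun j _ => ?_) (hm t)
        have := sub_add_fract_sub_fract_le_card (x j - t) (y j - t)
        rwa [sub_sub_sub_cancel_right] at this
    _ = m := by simp

/-- The number of integer translates of `t` lying in the intervals `F^j [a, d]`, `j < i`, counted
with multiplicity: how often the images on the circle of these intervals cover `t`. -/
def orbitCover (F : ℝ → ℝ) (i : ℕ) (a d t : ℝ) : ℕ :=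
  ∑ j ∈ Finset.range i, (Finset.Icc ⌈F^[j] a - t⌉ ⌊F^[j] d - t⌋).card

/-- The cross-ratio inequality: iterating `F` increases a cross-ratio at most by a factor
depending only on the multiplicity with which the intermediate intervals cover the circle. -/
def CrossRatioInequality (F : ℝ → ℝ) : Prop :=
  ∀ m : ℕ, ∃ B, 1 ≤ B ∧ ∀ i a b c d, a < b → b < c → c < d → (∀ t, orbitCover F i a d t ≤ m) →
    crossRatio (F^[i] a) (F^[i] b) (F^[i] c) (F^[i] d) ≤ B * crossRatio a b c d

theorem MCM.crossRatioInequality (f : MCM) : CrossRatioInequality f.F := by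
  intro m
  obtain ⟨κ, hκ, hstep⟩ := f.exists_crossRatio_map_le_exp
  refine ⟨Real.exp (κ * (m + f.N * m)), Real.one_le_exp (by positivity), ?_⟩
  intro i a b c d hab hbc hcd hm
  have hchain : ∀ i, crossRatio (f.F^[i] a) (f.F^[i] b) (f.F^[i] c) (f.F^[i] d) ≤
      Real.exp (κ * ∑ j ∈ Finset.range i,
        ((f.F^[j] d - f.F^[j] a) + f.critCount (f.F^[j] a) (f.F^[j] d))) *
          crossRatio a b c d := by
    intro i
    induction i with
    | zero => simp
    | succ i ih =>
      rw [Finset.sum_range_succ, mul_add, Real.exp_add, mul_comm (Real.exp _), mul_assoc]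
      simp only [Function.iterate_succ_apply']
      exact (hstep _ _ _ _ (f.mono.iterate i hab) (f.mono.iterate i hbc)
        (f.mono.iterate i hcd)).trans (mul_le_mul_of_nonneg_left ih (Real.exp_pos _).le)
  have hlen : ∑ j ∈ Finset.range i, (f.F^[j] d - f.F^[j] a) ≤ m :=
    sum_sub_le_of_sum_card_le fun t => mod_cast hm t
  have hcrit : ∑ j ∈ Finset.range i, f.critCount (f.F^[j] a) (f.F^[j] d) ≤ f.N * m := by
    simp only [MCM.critCount]
    rw [Finset.sum_comm]
    simpa [orbitCover] using Finset.sum_le_sum fun k (_ : k ∈ Finset.univ) => hm (f.c k)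
  have hcrit' : ∑ j ∈ Finset.range i, (f.critCount (f.F^[j] a) (f.F^[j] d) : ℝ) ≤ f.N * m :=
    mod_cast hcrit
  refine (hchain i).trans (mul_le_mul_of_nonneg_right (Real.exp_le_exp.mpr ?_)
    (crossRatio_nonneg _ _ _ _))
  rw [Finset.sum_add_distrib]
  gcongr

/-! ### Closest returns of a circle homeomorphism -/

section DeckMap

variable {u : CircleDeg1Liftˣ}

/-- The lift `x ↦ u^m x - k` of the `m`-th iterate of the circle homeomorphism with lift `u`. -/
def deckMap (u : CircleDeg1Liftˣ) (m k : ℤ) : ℝ ≃o ℝ :=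
  CircleDeg1Lift.toOrderIso (u ^ m * CircleDeg1Lift.translate (Multiplicative.ofAdd (-(k : ℝ))))

lemma deckMap_apply (m k : ℤ) (x : ℝ) : deckMap u m k x = (u ^ m : CircleDeg1Liftˣ) x - k := by
  rw [← CircleDeg1Lift.map_sub_int, sub_eq_neg_add]
  rfl

lemma deckMap_deckMap (m k m' k' : ℤ) (x : ℝ) :
    deckMap u m k (deckMap u m' k' x) = deckMap u (m + m') (k + k') x := by
  simp only [deckMap_apply, CircleDeg1Lift.map_sub_int, zpow_add, Units.val_mul,
    CircleDeg1Lift.mul_apply]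
  push_cast
  ring

lemma deckMap_zero_zero (x : ℝ) : deckMap u 0 0 x = x := by
  simp [deckMap_apply]

lemma deckMap_natCast (i : ℕ) (k : ℤ) (x : ℝ) : deckMap u i k x = u^[i] x - k := by
  rw [deckMap_apply, zpow_natCast, Units.val_pow_eq_pow_val, CircleDeg1Lift.coe_pow]

lemma deckMap_one_zero (x : ℝ) : deckMap u 1 0 x = u x := by
  simp [deckMap_apply]

lemma deckMap_add_int (m k l : ℤ) (x : ℝ) : deckMap u m k (x + l) = deckMap u m k x + l := by
  rw [deckMap_apply, deckMap_apply, CircleDeg1Lift.map_add_int, add_sub_right_comm]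

end DeckMap

section Return

variable {u : CircleDeg1Liftˣ} {ρ : ℝ}

/-- The lift `g^a G^b`, where `g` and `G` are the closest returns of levels `n` and `n + 1`. -/
def returnMap (u : CircleDeg1Liftˣ) (ρ : ℝ) (n : ℕ) (a b : ℤ) : ℝ ≃o ℝ :=
  deckMap u (a * qDen ρ n + b * qDen ρ (n + 1)) (a * pNum ρ n + b * pNum ρ (n + 1))

lemma returnMap_returnMap (n : ℕ) (a b a' b' : ℤ) (x : ℝ) :
    returnMap u ρ n a b (returnMap u ρ n a' b' x) = returnMap u ρ n (a + a') (b + b') x := by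
  simp only [returnMap, deckMap_deckMap]
  congr 2 <;> ring

lemma returnMap_zero_zero (n : ℕ) (x : ℝ) : returnMap u ρ n 0 0 x = x := by
  simp [returnMap, deckMap_zero_zero]

lemma deckMap_returnMap (m k : ℤ) (n : ℕ) (a b : ℤ) (x : ℝ) :
    deckMap u m k (returnMap u ρ n a b x) = returnMap u ρ n a b (deckMap u m k x) := by
  simp only [returnMap, deckMap_deckMap, add_comm]

lemma returnMap_succ_one_zero (n : ℕ) : returnMap u ρ (n + 1) 1 0 = returnMap u ρ n 0 1 := by
  simp [returnMap]

lemma returnMap_natCast_zero (n j : ℕ) :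
    returnMap u ρ n j 0 = deckMap u (j * qDen ρ n : ℕ) (j * pNum ρ n) := by
  simp [returnMap]

/-- The length `|g x - x|` of the interval between `x` and its closest return of level `n`. -/
def returnLen (u : CircleDeg1Liftˣ) (ρ : ℝ) (n : ℕ) (x : ℝ) : ℝ := |returnMap u ρ n 1 0 x - x|

lemma returnLen_nonneg (n : ℕ) (x : ℝ) : 0 ≤ returnLen u ρ n x := abs_nonneg _

lemma returnLen_succ (n : ℕ) (x : ℝ) : returnLen u ρ (n + 1) x = |returnMap u ρ n 0 1 x - x| := by
  rw [returnLen, returnMap_succ_one_zero]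

lemma returnLen_map (n : ℕ) (x : ℝ) :
    returnLen u ρ n (u x) = |u (returnMap u ρ n 1 0 x) - u x| := by
  rw [returnLen, ← deckMap_one_zero, ← deckMap_returnMap, deckMap_one_zero]

lemma abs_returnMap_sub_returnMap (n : ℕ) (a b : ℤ) (x : ℝ) :
    |returnMap u ρ n (a + 1) b x - returnMap u ρ n a b x| =
      returnLen u ρ n (returnMap u ρ n a b x) := by
  rw [returnLen, returnMap_returnMap, add_comm 1 a, zero_add]

lemma returnLen_add_int (n : ℕ) (x : ℝ) (k : ℤ) :
    returnLen u ρ n (x + k) = returnLen u ρ n x := by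
  simp only [returnLen, returnMap, deckMap_add_int, add_sub_add_right_eq_sub]

lemma returnLen_iterate_qDen (m n : ℕ) (x : ℝ) :
    returnLen u ρ n (u^[qDen ρ m] x) = returnLen u ρ n (returnMap u ρ m 1 0 x) := by
  rw [← returnLen_add_int n (returnMap u ρ m 1 0 x) (pNum ρ m), returnMap]
  simp only [one_mul, zero_mul, add_zero, deckMap_natCast, sub_add_cancel]

lemma exists_returnLen_le (u : CircleDeg1Liftˣ) (ρ : ℝ) (n : ℕ) :
    ∃ x, ∀ y, returnLen u ρ n x ≤ returnLen u ρ n y := by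
  have hcont : Continuous (returnLen u ρ n) :=
    ((returnMap u ρ n 1 0).continuous.sub continuous_id).abs
  have hper : Function.Periodic (returnLen u ρ n) 1 := fun x => by
    simpa using returnLen_add_int (u := u) (ρ := ρ) n x 1
  obtain ⟨x, -, hx⟩ := isCompact_Icc.exists_isMinOn (nonempty_Icc.mpr (zero_le_one (α := ℝ)))
    hcont.continuousOn
  refine ⟨x, fun y => ?_⟩
  obtain ⟨z, hz, hyz⟩ := hper.exists_mem_Ico₀ one_pos y
  exact hyz ▸ hx (Ico_subset_Icc_self hz)

lemma atomLen_eq_returnLen (x : ℝ) (n j : ℕ) :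
    atomLen u ρ x n j = returnLen u ρ n (u^[j] x) := by
  have h : returnMap u ρ n 1 0 (u^[j] x) = u^[j + qDen ρ n] x - pNum ρ n := by
    rw [returnMap, one_mul, zero_mul, add_zero, one_mul, zero_mul, add_zero, deckMap_natCast,
      Int.cast_natCast, add_comm j, Function.iterate_add_apply]
  rw [atomLen, returnLen, h]

end Return

section Quadruple

variable {a b c d : ℝ}

/-- Four real numbers in strictly monotone, increasing or decreasing, order. -/
def IsMonotoneQuad (a b c d : ℝ) : Prop := (a < b ∧ b < c ∧ c < d) ∨ (d < c ∧ c < b ∧ b < a)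

namespace IsMonotoneQuad

lemma map (h : IsMonotoneQuad a b c d) {φ : ℝ → ℝ} (hφ : StrictMono φ) :
    IsMonotoneQuad (φ a) (φ b) (φ c) (φ d) := by
  simpa only [IsMonotoneQuad, hφ.lt_iff_lt] using h

lemma abs_inner_le_abs_outer (h : IsMonotoneQuad a b c d) : |c - b| ≤ |d - a| := by
  rcases h with ⟨h₁, h₂, h₃⟩ | ⟨h₁, h₂, h₃⟩
  · rw [abs_of_pos (by linarith), abs_of_pos (by linarith)]
    linarith
  · rw [abs_of_neg (by linarith), abs_of_neg (by linarith)]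
    linarith

lemma abs_inner_le_abs_left (h : IsMonotoneQuad a b c d) : |c - b| ≤ |c - a| := by
  rcases h with ⟨h₁, h₂, -⟩ | ⟨-, h₂, h₃⟩
  · rw [abs_of_pos (by linarith), abs_of_pos (by linarith)]
    linarith
  · rw [abs_of_neg (by linarith), abs_of_neg (by linarith)]
    linarith

lemma one_le_mul_crossRatio (h : IsMonotoneQuad a b c d) {M₁ M₂ : ℝ}
    (h₁ : |c - b| ≤ M₁ * |b - a|) (h₂ : |c - b| ≤ M₂ * |d - c|) :
    1 ≤ (1 + M₁) * (1 + M₂) * crossRatio a b c d := by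
  have hca : |c - a| ≤ (1 + M₁) * |b - a| := by linarith [abs_sub_le c b a]
  have hdb : |d - b| ≤ (1 + M₂) * |d - c| := by linarith [abs_sub_le d c b]
  have hpos : 0 < |c - a| * |d - b| := by
    rcases h with ⟨_, _, _⟩ | ⟨_, _, _⟩ <;>
      exact mul_pos (abs_pos.mpr (by linarith)) (abs_pos.mpr (by linarith))
  rw [crossRatio, mul_div_assoc', le_div_iff₀ hpos, one_mul]
  exact (mul_le_mul hca hdb (abs_nonneg _) ((abs_nonneg _).trans hca)).trans_eq (by ring)

lemma abs_sub_le_of_one_le_mul_crossRatio (h : IsMonotoneQuad a b c d) {M : ℝ} (hM : 0 ≤ M)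
    (hcr : 1 ≤ M * crossRatio a b c d) : |c - b| ≤ M * |b - a| ∧ |c - b| ≤ M * |d - c| := by
  obtain ⟨hca, hdb, hpos⟩ : |c - a| = |c - b| + |b - a| ∧ |d - b| = |d - c| + |c - b| ∧
      0 < |c - b| := by
    rcases h with ⟨_, _, _⟩ | ⟨_, _, _⟩
    · simp only [abs_of_pos, sub_pos, *, show a < c by linarith, show b < d by linarith]
      constructor <;> [ring; constructor <;> [ring; trivial]]
    · simp only [abs_of_neg, sub_neg, *, show c < a by linarith, show d < b by linarith]
      constructor <;> [ring; constructor <;> [ring; linarith]]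
  have hba := abs_nonneg (b - a)
  have hdc := abs_nonneg (d - c)
  rw [crossRatio, hca, hdb, mul_div_assoc', le_div_iff₀ (by positivity), one_mul] at hcr
  constructor
  · refine le_of_mul_le_mul_right ?_ (by linarith : 0 < |d - c| + |c - b|)
    nlinarith [mul_nonneg (mul_nonneg hM hba) hpos.le, mul_nonneg hba hdc,
      mul_nonneg hba hpos.le]
  · refine le_of_mul_le_mul_right ?_ (by linarith : 0 < |c - b| + |b - a|)
    nlinarith [mul_nonneg (mul_nonneg hM hdc) hpos.le, mul_nonneg hba hdc,
      mul_nonneg hdc hpos.le]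

end IsMonotoneQuad

end Quadruple

/-- A semiconjugacy from the circle homeomorphism with lift `u` to the rotation by an irrational
number `ρ` of `(0, 1)`. -/
structure IrrationalFactor (u : CircleDeg1Liftˣ) (ρ : ℝ) where
  /-- the lift of the semiconjugacy -/
  lift : CircleDeg1Lift
  irrational : Irrational ρ
  mem_Ioo : ρ ∈ Ioo (0 : ℝ) 1
  semiconj : ∀ x, lift (u x) = lift x + ρ

namespace IrrationalFactor

variable {u : CircleDeg1Liftˣ} {ρ : ℝ} (H : IrrationalFactor u ρ)
include H

lemma lift_iterate (i : ℕ) (x : ℝ) : H.lift (u^[i] x) = H.lift x + i * ρ := by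
  induction i with
  | zero => simp
  | succ i ih =>
    rw [Function.iterate_succ_apply', H.semiconj, ih]
    push_cast
    ring

lemma lift_deckMap (m k : ℤ) (x : ℝ) : H.lift (deckMap u m k x) = H.lift x + m * ρ - k := by
  rw [deckMap_apply, CircleDeg1Lift.map_sub_int]
  congr 1
  obtain ⟨j, rfl | rfl⟩ := m.eq_nat_or_neg
  · rw [zpow_natCast, Units.val_pow_eq_pow_val, CircleDeg1Lift.coe_pow, H.lift_iterate,
      Int.cast_natCast]
  · rw [zpow_neg, zpow_natCast]
    have h := H.lift_iterate j (((u ^ j)⁻¹ : CircleDeg1Liftˣ) x)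
    rw [← CircleDeg1Lift.coe_pow, ← Units.val_pow_eq_pow_val,
      CircleDeg1Lift.units_apply_inv_apply] at h
    rw [h, Int.cast_neg, Int.cast_natCast, neg_mul, add_neg_cancel_right]

lemma abs_sub_le_two {x y : ℝ} (h : |H.lift x - H.lift y| < 2) : |x - y| ≤ 2 := by
  rw [abs_lt] at h
  rw [abs_le]
  constructor
  · have := H.lift.monotone.reflect_lt (a := y) (b := x + (2 : ℤ))
      (by rw [CircleDeg1Lift.map_add_int]; push_cast; linarith)
    push_cast at this
    linarith
  · have := H.lift.monotone.reflect_lt (a := x) (b := y + (2 : ℤ))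
      (by rw [CircleDeg1Lift.map_add_int]; push_cast; linarith)
    push_cast at this
    linarith

/-- The height of `x` over the rotation, in units of the error `q_n ρ - p_n` of the `n`-th
convergent. As the sign of this error alternates, the position is order-preserving or
order-reversing according to the parity of `n`. -/
def position (n : ℕ) (x : ℝ) : ℝ := H.lift x / cfError ρ n

lemma position_mul_cfError (n : ℕ) (x : ℝ) : H.position n x * cfError ρ n = H.lift x :=
  div_mul_cancel₀ _ (cfError_ne_zero H.irrational H.mem_Ioo n)

lemma position_returnMap (n : ℕ) (a b : ℤ) (x : ℝ) :
    H.position n (returnMap u ρ n a b x) = H.position n x + a - b * gaussMap^[n + 1] ρ := by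
  have h := cfError_ne_zero H.irrational H.mem_Ioo n
  have hsucc := cfError_succ H.irrational H.mem_Ioo n
  rw [position, returnMap, lift_deckMap, position]
  rw [cfError] at h
  simp only [cfError] at hsucc ⊢
  rw [div_add' _ _ _ h, div_sub' h]
  congr 1
  push_cast
  linear_combination (b : ℝ) * hsucc

lemma gaussMap_mem_Ioo (n : ℕ) : gaussMap^[n + 1] ρ ∈ Ioo (0 : ℝ) 1 :=
  gaussMap_iterate_mem_Ioo H.irrational H.mem_Ioo (n + 1)

lemma exists_position_deckMap_mem_Icc (n : ℕ) (A y : ℝ) :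
    ∃ i < qDen ρ (n + 1), ∃ k : ℤ, H.position n (deckMap u i k y) ∈ Icc A (A + 4) := by
  obtain ⟨i, hi, k, τ, hτ, h⟩ := exists_rotation_eq_mul_cfError H.irrational H.mem_Ioo (n := n)
    (H.lift y - A * cfError ρ n)
  refine ⟨i, hi, k, ?_⟩
  have hpos : H.position n (deckMap u i k y) = A + τ := by
    rw [position, lift_deckMap, div_eq_iff (cfError_ne_zero H.irrational H.mem_Ioo n)]
    push_cast
    linarith
  rw [hpos]
  exact ⟨by linarith [hτ.1], by linarith [hτ.2]⟩

variable {n : ℕ} {a b c d : ℝ}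

lemma isMonotoneQuad (hab : H.position n a < H.position n b)
    (hbc : H.position n b < H.position n c) (hcd : H.position n c < H.position n d) :
    IsMonotoneQuad a b c d := by
  rcases lt_or_gt_of_ne (cfError_ne_zero H.irrational H.mem_Ioo n) with hneg | hpos
  · have h : ∀ {x y}, H.position n x < H.position n y → y < x := fun hxy =>
      H.lift.monotone.reflect_lt ((div_lt_div_right_of_neg hneg).mp hxy)
    exact Or.inr ⟨h hcd, h hbc, h hab⟩
  · have h : ∀ {x y}, H.position n x < H.position n y → x < y := fun hxy =>
      H.lift.monotone.reflect_lt ((div_lt_div_iff_of_pos_right hpos).mp hxy)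
    exact Or.inl ⟨h hab, h hbc, h hcd⟩

lemma orbitCover_le {L i w : ℕ} (hi : i ≤ L * qDen ρ (n + 1))
    (hw : |H.position n d - H.position n a| ≤ w) (t : ℝ) : orbitCover u i a d t ≤ L * (w + 1) := by
  have hheight : H.lift d - H.lift a ≤ w * |cfError ρ n| := by
    rw [← H.position_mul_cfError n d, ← H.position_mul_cfError n a, ← sub_mul]
    exact (le_abs_self _).trans ((abs_mul _ _).trans_le
      (mul_le_mul_of_nonneg_right hw (abs_nonneg _)))
  refine sum_card_rotation_le (A := H.lift a - H.lift t) H.irrational H.mem_Ioo hi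
    fun j _ k hk => ?_
  rw [Finset.mem_Icc, Int.ceil_le, Int.le_floor] at hk
  have h₁ : H.lift (u^[j] a) ≤ H.lift (t + k) := H.lift.monotone (by linarith [hk.1])
  have h₂ : H.lift (t + k) ≤ H.lift (u^[j] d) := H.lift.monotone (by linarith [hk.2])
  rw [lift_iterate, CircleDeg1Lift.map_add_int] at h₁ h₂
  constructor <;> linarith

lemma exists_crossRatio_iterate_le (hu : CrossRatioInequality u) (L w : ℕ) :
    ∃ B, 1 ≤ B ∧ ∀ {n i a b c d}, i ≤ L * qDen ρ (n + 1) → IsMonotoneQuad a b c d →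
      |H.position n d - H.position n a| ≤ w →
      crossRatio (u^[i] a) (u^[i] b) (u^[i] c) (u^[i] d) ≤ B * crossRatio a b c d := by
  obtain ⟨B, hB, h⟩ := hu (L * (w + 1))
  refine ⟨B, hB, fun {n i a b c d} hi hquad hw => ?_⟩
  rcases hquad with ⟨hab, hbc, hcd⟩ | ⟨hdc, hcb, hba⟩
  · exact h i a b c d hab hbc hcd (H.orbitCover_le hi hw)
  · rw [← crossRatio_reverse, ← crossRatio_reverse a]
    exact h i d c b a hdc hcb hba (H.orbitCover_le hi (by rwa [abs_sub_comm]))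

/-- A Koebe principle for inverse branches of bounded multiplicity. -/
lemma exists_space_bound (hu : CrossRatioInequality u) (L w : ℕ) :
    ∃ B, 1 ≤ B ∧ ∀ {n i a b c d} (k : ℤ), i ≤ L * qDen ρ (n + 1) →
      H.position n a < H.position n b → H.position n b < H.position n c →
      H.position n c < H.position n d → H.position n d ≤ H.position n a + w →
      ∀ {M₁ M₂}, 0 ≤ M₁ → 0 ≤ M₂ →
      |deckMap u i k c - deckMap u i k b| ≤ M₁ * |deckMap u i k b - deckMap u i k a| →
      |deckMap u i k c - deckMap u i k b| ≤ M₂ * |deckMap u i k d - deckMap u i k c| →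
      |c - b| ≤ (1 + M₁) * (1 + M₂) * B * |b - a| ∧
        |c - b| ≤ (1 + M₁) * (1 + M₂) * B * |d - c| := by
  obtain ⟨B, hB, h⟩ := H.exists_crossRatio_iterate_le hu L w
  refine ⟨B, hB, fun {n i a b c d} k hi hab hbc hcd hw {M₁ M₂} hM₁ hM₂ h₁ h₂ => ?_⟩
  have hquad := H.isMonotoneQuad hab hbc hcd
  have himage : crossRatio (deckMap u i k a) (deckMap u i k b) (deckMap u i k c) (deckMap u i k d)
      = crossRatio (u^[i] a) (u^[i] b) (u^[i] c) (u^[i] d) := by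
    simp only [deckMap_natCast, crossRatio, sub_sub_sub_cancel_right]
  refine hquad.abs_sub_le_of_one_le_mul_crossRatio (by positivity) ?_
  calc 1 ≤ (1 + M₁) * (1 + M₂) * crossRatio (u^[i] a) (u^[i] b) (u^[i] c) (u^[i] d) :=
        himage ▸ (hquad.map (deckMap u i k).strictMono).one_le_mul_crossRatio h₁ h₂
    _ ≤ (1 + M₁) * (1 + M₂) * (B * crossRatio a b c d) := by
        gcongr
        exact h hi hquad (by rw [abs_of_pos (by linarith)]; linarith)
    _ = (1 + M₁) * (1 + M₂) * B * crossRatio a b c d := by ring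

end IrrationalFactor

/-! ### Comparable closest returns -/

section IsComparable

variable {a b c C D : ℝ}

/-- The two lengths `a` and `b` are comparable with constant `C`. -/
def IsComparable (C a b : ℝ) : Prop := a ≤ C * b ∧ b ≤ C * a

namespace IsComparable

lemma symm (h : IsComparable C a b) : IsComparable C b a := And.symm h

lemma trans (hC : 0 ≤ C) (hD : 0 ≤ D) (hab : IsComparable C a b) (hbc : IsComparable D b c) :
    IsComparable (C * D) a c :=
  ⟨hab.1.trans ((mul_le_mul_of_nonneg_left hbc.1 hC).trans_eq (mul_assoc _ _ _).symm),
    hbc.2.trans ((mul_le_mul_of_nonneg_left hab.2 hD).trans_eq (by ring))⟩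

lemma mono (ha : 0 ≤ a) (hb : 0 ≤ b) (hCD : C ≤ D) (h : IsComparable C a b) :
    IsComparable D a b :=
  ⟨h.1.trans (mul_le_mul_of_nonneg_right hCD hb), h.2.trans (mul_le_mul_of_nonneg_right hCD ha)⟩

end IsComparable

end IsComparable

/-- Neighbouring intervals between consecutive closest returns of the same level are comparable
with constant `K`. -/
def HasComparableReturns (u : CircleDeg1Liftˣ) (ρ K : ℝ) : Prop :=
  1 ≤ K ∧ ∀ n y, IsComparable K (returnLen u ρ n y) (returnLen u ρ n (returnMap u ρ n 1 0 y))

namespace IrrationalFactor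

variable {u : CircleDeg1Liftˣ} {ρ : ℝ} (H : IrrationalFactor u ρ)

include H

lemma exists_returnLen_space_bound (hu : CrossRatioInequality u) (L : ℕ) :
    ∃ B, 1 ≤ B ∧ ∀ {n i} (k : ℤ) {y M}, i ≤ L * qDen ρ (n + 1) → 0 ≤ M →
      returnLen u ρ n (deckMap u i k y) ≤
        M * returnLen u ρ n (deckMap u i k (returnMap u ρ n (-1) 0 y)) →
      returnLen u ρ n (deckMap u i k y) ≤
        M * returnLen u ρ n (deckMap u i k (returnMap u ρ n 1 0 y)) →
      returnLen u ρ n y ≤ (1 + M) * (1 + M) * B * returnLen u ρ n (returnMap u ρ n (-1) 0 y) ∧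
        returnLen u ρ n y ≤ (1 + M) * (1 + M) * B * returnLen u ρ n (returnMap u ρ n 1 0 y) := by
  obtain ⟨B, hB, hspace⟩ := H.exists_space_bound hu L 3
  refine ⟨B, hB, fun {n i} k {y M} hi hM hleft hright => ?_⟩
  have hpos := fun a : ℤ => H.position_returnMap n a 0 y
  have hgap := fun a : ℤ => abs_returnMap_sub_returnMap (u := u) (ρ := ρ) n a 0
  have h := hspace (a := returnMap u ρ n (-1) 0 y) (b := y) (c := returnMap u ρ n 1 0 y)
    (d := returnMap u ρ n 2 0 y) k hi (by rw [hpos]; push_cast; linarith)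
    (by rw [hpos]; push_cast; linarith) (by rw [hpos, hpos]; push_cast; linarith)
    (by rw [hpos, hpos]; push_cast; linarith) hM hM
  have hleft' := hgap (-1)
  have hmid := hgap 0
  have hright' := hgap 1
  simp only [deckMap_returnMap] at h hleft hright
  norm_num [returnMap_zero_zero] at hleft' hmid hright'
  rw [hleft', hmid, hright', hleft', hmid, hright'] at h
  exact h hleft hright

/-- The interval `[g⁻ʲ x, g¹⁻ʲ x]` is an inverse image of the shortest interval `[x, g x]`, which
has space on both sides because its neighbours are longer. -/
lemma exists_returnLen_le_mul_of_minimal (hu : CrossRatioInequality u) (N : ℕ) :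
    ∃ C, 1 ≤ C ∧ ∀ {n x}, (∀ y, returnLen u ρ n x ≤ returnLen u ρ n y) → ∀ j ≤ N,
      returnLen u ρ n (returnMap u ρ n (-j) 0 x) ≤
        C * returnLen u ρ n (returnMap u ρ n (-j + 1) 0 x) := by
  obtain ⟨B, hB, hspace⟩ := H.exists_returnLen_space_bound hu N
  refine ⟨(1 + 1) * (1 + 1) * B, by linarith, fun {n x} hx j hj => ?_⟩
  have h := (hspace (n := n) (i := j * qDen ρ n) (j * pNum ρ n)
    (y := returnMap u ρ n (-j) 0 x) (M := 1)
    (Nat.mul_le_mul hj (qDen_le_succ H.irrational H.mem_Ioo n)) zero_le_one)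
  rw [← returnMap_natCast_zero] at h
  simp only [returnMap_returnMap, add_neg_cancel, add_zero, returnMap_zero_zero, one_mul] at h
  rw [add_comm (-(j : ℤ)) 1]
  exact (h (hx _) (hx _)).2

lemma exists_abs_sub_le_mul_of_minimal (hu : CrossRatioInequality u) (N : ℕ) :
    ∃ T, 1 ≤ T ∧ ∀ {n x}, (∀ y, returnLen u ρ n x ≤ returnLen u ρ n y) →
      |returnMap u ρ n 1 0 x - returnMap u ρ n (-N) 0 x| ≤ T * returnLen u ρ n x := by
  obtain ⟨C, hC, hstep⟩ := H.exists_returnLen_le_mul_of_minimal hu N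
  refine ⟨∑ i ∈ Finset.range (N + 1), C ^ i, ?_, fun {n x} hx => ?_⟩
  · simpa using Finset.single_le_sum (f := fun i => C ^ i) (fun i _ => by positivity)
      (Finset.mem_range.mpr N.succ_pos)
  suffices h : ∀ j ≤ N,
      returnLen u ρ n (returnMap u ρ n (-j) 0 x) ≤ C ^ j * returnLen u ρ n x ∧
      |returnMap u ρ n 1 0 x - returnMap u ρ n (-j) 0 x| ≤
        (∑ i ∈ Finset.range (j + 1), C ^ i) * returnLen u ρ n x from (h N le_rfl).2
  intro j hj
  induction j with
  | zero => simp [returnMap_zero_zero, returnLen]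
  | succ j ih =>
    obtain ⟨hlen, hdist⟩ := ih (by omega)
    have hsucc : -((j + 1 : ℕ) : ℤ) + 1 = -j := by push_cast; ring
    have hgap := abs_returnMap_sub_returnMap (u := u) (ρ := ρ) n (-(j + 1 : ℕ)) 0 x
    have hlen' := hstep hx (j + 1) hj
    rw [hsucc] at hgap hlen'
    have hpow : returnLen u ρ n (returnMap u ρ n (-(j + 1 : ℕ)) 0 x) ≤
        C ^ (j + 1) * returnLen u ρ n x := by
      refine hlen'.trans ((mul_le_mul_of_nonneg_left hlen (by linarith)).trans_eq ?_)
      ring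
    refine ⟨hpow, ?_⟩
    rw [Finset.sum_range_succ, add_mul]
    exact (abs_sub_le _ _ _).trans (add_le_add hdist (hgap.trans_le hpow))

lemma exists_hasComparableReturns (hu : CrossRatioInequality u) :
    ∃ K, HasComparableReturns u ρ K := by
  obtain ⟨T, hT, htotal⟩ := H.exists_abs_sub_le_mul_of_minimal hu 6
  obtain ⟨B, hB, hspace⟩ := H.exists_returnLen_space_bound hu 1
  suffices h : ∀ n y,
      returnLen u ρ n y ≤ (1 + T) * (1 + T) * B * returnLen u ρ n (returnMap u ρ n (-1) 0 y) ∧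
      returnLen u ρ n y ≤ (1 + T) * (1 + T) * B * returnLen u ρ n (returnMap u ρ n 1 0 y) by
    refine ⟨(1 + T) * (1 + T) * B, by nlinarith, fun n y => ⟨(h n y).2, ?_⟩⟩
    simpa [returnMap_returnMap, returnMap_zero_zero] using (h n (returnMap u ρ n 1 0 y)).1
  intro n y
  obtain ⟨x, hx⟩ := exists_returnLen_le u ρ n
  obtain ⟨i, hi, k, hz⟩ := H.exists_position_deckMap_mem_Icc n (H.position n x - 5) y
  set z := deckMap u i k y
  have hquad : IsMonotoneQuad (returnMap u ρ n (-6) 0 x) z (returnMap u ρ n 1 0 z)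
      (returnMap u ρ n 1 0 x) := by
    apply H.isMonotoneQuad (n := n) <;> simp only [H.position_returnMap] <;> push_cast <;>
      linarith [hz.1, hz.2]
  have hlen : returnLen u ρ n z ≤ T * returnLen u ρ n x :=
    hquad.abs_inner_le_abs_outer.trans (htotal hx)
  have hle : ∀ w, returnLen u ρ n z ≤ T * returnLen u ρ n w := fun w =>
    hlen.trans (mul_le_mul_of_nonneg_left (hx w) (by linarith))
  exact hspace k (by omega) (by linarith) (hle _) (hle _)

end IrrationalFactor

/-! ### Consecutive levels -/

/-- `F` behaves near `p` like a power of exponent `s > 1`, uniformly up to distance `2` (twice the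
circumference of the circle). -/
def IsPowerLawAt (F : ℝ → ℝ) (p : ℝ) : Prop :=
  ∃ s > (1 : ℝ), ∃ α > (0 : ℝ), ∃ β > (0 : ℝ), ∀ x, |x - p| ≤ 2 →
    |F x - F p| ∈ Icc (α * |x - p| ^ s) (β * |x - p| ^ s)

lemma exists_bound_of_rpow_le_mul_one_add {s : ℝ} (hs : 1 < s) (A : ℝ) :
    ∃ R, 1 ≤ R ∧ ∀ r, 0 ≤ r → r ^ s ≤ A * (1 + r) → r ≤ R := by
  refine ⟨max 1 ((2 * A) ^ (s - 1)⁻¹), le_max_left _ _, fun r hr h => ?_⟩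
  rcases le_or_gt r 1 with hr₁ | hr₁
  · exact hr₁.trans (le_max_left _ _)
  refine le_trans ?_ (le_max_right _ _)
  have hA : 0 ≤ A := nonneg_of_mul_nonneg_left ((Real.rpow_nonneg hr s).trans h) (by linarith)
  rw [Real.le_rpow_inv_iff_of_pos hr (by positivity) (sub_pos.mpr hs),
    Real.rpow_sub_one (by linarith), div_le_iff₀ (by linarith)]
  nlinarith

namespace HasComparableReturns

variable {u : CircleDeg1Liftˣ} {ρ K : ℝ}

lemma abs_returnMap_two_sub_le (hK : HasComparableReturns u ρ K) (n : ℕ) (x : ℝ) :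
    |returnMap u ρ n 2 0 x - x| ≤ (1 + K) * returnLen u ρ n x := by
  have hgap := abs_returnMap_sub_returnMap (u := u) (ρ := ρ) n 1 0 x
  norm_num at hgap
  have := abs_sub_le (returnMap u ρ n 2 0 x) (returnMap u ρ n 1 0 x) x
  rw [hgap] at this
  exact this.trans (by linarith [(hK.2 n x).2, returnLen.eq_def u ρ n x])

lemma abs_returnMap_one_sub_neg_one_le (hK : HasComparableReturns u ρ K) (n : ℕ) (x : ℝ) :
    |returnMap u ρ n 1 0 x - returnMap u ρ n (-1) 0 x| ≤ (1 + K) * returnLen u ρ n x := by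
  have hgap := abs_returnMap_sub_returnMap (u := u) (ρ := ρ) n (-1) 0 x
  have hle := (hK.2 n (returnMap u ρ n (-1) 0 x)).1
  simp only [returnMap_returnMap, add_neg_cancel, neg_add_cancel, add_zero,
    returnMap_zero_zero] at hgap hle
  have := abs_sub_le (returnMap u ρ n 1 0 x) x (returnMap u ρ n (-1) 0 x)
  rw [hgap] at this
  exact this.trans (by linarith [returnLen.eq_def u ρ n x])

end HasComparableReturns

namespace IrrationalFactor

variable {u : CircleDeg1Liftˣ} {ρ K : ℝ} (H : IrrationalFactor u ρ)
include H

lemma returnLen_pos (n : ℕ) (x : ℝ) : 0 < returnLen u ρ n x := by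
  refine abs_pos.mpr (sub_ne_zero.mpr fun h => ?_)
  have hpos := H.position_returnMap n 1 0 x
  rw [h] at hpos
  norm_num at hpos

section Comparable

variable (hK : HasComparableReturns u ρ K)
include hK

lemma isComparable_returnLen_next (n : ℕ) (x : ℝ) :
    IsComparable (1 + K) (returnLen u ρ n x) (returnLen u ρ n (returnMap u ρ n 0 1 x)) := by
  obtain ⟨hγ, hγ'⟩ := H.gaussMap_mem_Ioo n
  have hleft : IsMonotoneQuad (returnMap u ρ n 0 1 x) x (returnMap u ρ n 1 0 x)
      (returnMap u ρ n 2 1 x) := by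
    apply H.isMonotoneQuad (n := n) <;> simp only [H.position_returnMap] <;> push_cast <;>
      linarith
  have hright : IsMonotoneQuad (returnMap u ρ n (-1) 0 x) (returnMap u ρ n 0 1 x)
      (returnMap u ρ n 1 1 x) (returnMap u ρ n 1 0 x) := by
    apply H.isMonotoneQuad (n := n) <;> simp only [H.position_returnMap] <;> push_cast <;>
      linarith
  constructor
  · refine hleft.abs_inner_le_abs_outer.trans ?_
    simpa [returnMap_returnMap] using hK.abs_returnMap_two_sub_le n (returnMap u ρ n 0 1 x)
  · rw [← abs_returnMap_sub_returnMap, zero_add]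
    exact hright.abs_inner_le_abs_outer.trans (hK.abs_returnMap_one_sub_neg_one_le n x)

lemma returnLen_succ_le (n : ℕ) (x : ℝ) :
    returnLen u ρ (n + 1) x ≤ (1 + K) * returnLen u ρ n x := by
  obtain ⟨hγ, hγ'⟩ := H.gaussMap_mem_Ioo n
  have hquad : IsMonotoneQuad (returnMap u ρ n (-1) 0 x) (returnMap u ρ n 0 1 x) x
      (returnMap u ρ n 1 0 x) := by
    apply H.isMonotoneQuad (n := n) <;> simp only [H.position_returnMap] <;> push_cast <;>
      linarith
  rw [returnLen_succ, abs_sub_comm]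
  exact hquad.abs_inner_le_abs_outer.trans (hK.abs_returnMap_one_sub_neg_one_le n x)

/-- A bound on the ratio of consecutive return lengths pulls back along the orbit, from the
quadruple `G x, x, g x, g² x`. -/
lemma exists_returnLen_le_succ_of_deckMap (hu : CrossRatioInequality u) :
    ∃ C, 1 ≤ C ∧ ∀ {n i} (k : ℤ) {x M}, i ≤ qDen ρ (n + 1) → 0 ≤ M →
      returnLen u ρ n (deckMap u i k x) ≤ M * returnLen u ρ (n + 1) (deckMap u i k x) →
      returnLen u ρ n x ≤ (1 + M) * C * returnLen u ρ (n + 1) x := by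
  obtain ⟨B, hB, hspace⟩ := H.exists_space_bound hu 1 3
  have hK₁ := hK.1
  refine ⟨(1 + K) * B, by nlinarith, fun {n i} k {x M} hi hM hle => ?_⟩
  obtain ⟨hγ, hγ'⟩ := H.gaussMap_mem_Ioo n
  have h := hspace (n := n) (i := i) (a := returnMap u ρ n 0 1 x) (b := x)
    (c := returnMap u ρ n 1 0 x) (d := returnMap u ρ n 2 0 x) k (by rwa [one_mul])
    (by rw [H.position_returnMap]; push_cast; linarith)
    (by rw [H.position_returnMap]; push_cast; linarith)
    (by simp only [H.position_returnMap]; push_cast; linarith)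
    (by simp only [H.position_returnMap]; push_cast; linarith) hM (by linarith : 0 ≤ K)
  have hgap : ∀ z, |returnMap u ρ n 2 0 z - returnMap u ρ n 1 0 z| = _ := fun z =>
    abs_returnMap_sub_returnMap n 1 0 z
  have hsucc : ∀ z, |z - returnMap u ρ n 0 1 z| = returnLen u ρ (n + 1) z := fun z => by
    rw [abs_sub_comm, returnLen_succ]
  simp only [deckMap_returnMap, hgap, hsucc] at h
  exact (h hle (hK.2 n _).1).1.trans_eq (by ring)

end Comparable

end IrrationalFactor

namespace HasComparableReturns

variable {u : CircleDeg1Liftˣ} {ρ K : ℝ}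

lemma abs_preimage_sub_le (hK : HasComparableReturns u ρ K) (n : ℕ) (p : ℝ) :
    |returnMap u ρ n 0 (-1) p - p| ≤ K * returnLen u ρ (n + 1) p := by
  have h := (hK.2 (n + 1) (returnMap u ρ n 0 (-1) p)).1
  rwa [returnMap_succ_one_zero, returnLen_succ, returnMap_returnMap, add_zero, add_neg_cancel,
    returnMap_zero_zero, abs_sub_comm] at h

end HasComparableReturns

namespace IrrationalFactor

variable {u : CircleDeg1Liftˣ} {ρ K : ℝ} (H : IrrationalFactor u ρ)
include H

lemma abs_sub_le_two_of_position (n : ℕ) {x y : ℝ}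
    (h : |H.position n x - H.position n y| < 2) : |x - y| ≤ 2 := by
  refine H.abs_sub_le_two ?_
  rw [← H.position_mul_cfError n x, ← H.position_mul_cfError n y, ← sub_mul, abs_mul]
  have hle := abs_cfError_le_one H.irrational H.mem_Ioo n
  exact (mul_le_of_le_one_right (abs_nonneg _) hle).trans_lt h

/-- The quotient of `returnLen u ρ n p` by `returnLen u ρ (n + 1) p`, pulled back from `p` to
`u (G⁻¹ p)`. -/
lemma exists_abs_map_sub_map_le (hK : HasComparableReturns u ρ K)
    (hu : CrossRatioInequality u) :
    ∃ C, 1 ≤ C ∧ ∀ n p, |u (returnMap u ρ n 1 (-1) p) - u (returnMap u ρ n 0 (-1) p)| ≤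
      (1 + returnLen u ρ n p / returnLen u ρ (n + 1) p) * C *
        |u (returnMap u ρ n 0 (-1) p) - u p| := by
  obtain ⟨C, hC, hpull⟩ := H.exists_returnLen_le_succ_of_deckMap hK hu
  refine ⟨C, hC, fun n p => ?_⟩
  have hq := qDen_pos H.irrational H.mem_Ioo (n + 1)
  have hback : deckMap u (qDen ρ (n + 1) - 1 : ℕ) (pNum ρ (n + 1))
      (u (returnMap u ρ n 0 (-1) p)) = p := by
    rw [← deckMap_one_zero, returnMap, deckMap_deckMap, deckMap_deckMap]
    convert deckMap_zero_zero p using 3 <;> push_cast [Nat.cast_sub hq] <;> ring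
  have h := hpull (n := n) (i := qDen ρ (n + 1) - 1) (pNum ρ (n + 1))
    (x := u (returnMap u ρ n 0 (-1) p)) (M := returnLen u ρ n p / returnLen u ρ (n + 1) p)
    (Nat.sub_le _ _) (div_nonneg (returnLen_nonneg _ _) (returnLen_nonneg _ _))
    (by rw [hback, div_mul_cancel₀ _ (H.returnLen_pos (n + 1) p).ne'])
  rw [returnLen_map, returnLen_map, returnMap_succ_one_zero, returnMap_returnMap,
    returnMap_returnMap] at h
  simpa only [add_zero, zero_add, add_neg_cancel, returnMap_zero_zero, abs_sub_comm (u p)] using h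

lemma returnLen_le_abs_preimage_sub (hK : HasComparableReturns u ρ K) (n : ℕ) (p : ℝ) :
    returnLen u ρ n p ≤ (1 + K) * |returnMap u ρ n 1 (-1) p - p| := by
  obtain ⟨hγ, hγ'⟩ := H.gaussMap_mem_Ioo n
  have hquad : IsMonotoneQuad p (returnMap u ρ n 0 (-1) p) (returnMap u ρ n 1 (-1) p)
      (returnMap u ρ n 2 (-1) p) := by
    apply H.isMonotoneQuad (n := n) <;> simp only [H.position_returnMap] <;> push_cast <;>
      linarith
  have h := (H.isComparable_returnLen_next hK n (returnMap u ρ n 0 (-1) p)).2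
  rw [returnMap_returnMap, add_zero, add_neg_cancel, returnMap_zero_zero,
    ← abs_returnMap_sub_returnMap, zero_add] at h
  exact h.trans (mul_le_mul_of_nonneg_left hquad.abs_inner_le_abs_left (by linarith [hK.1]))

lemma exists_rpow_abs_preimage_sub_le (hK : HasComparableReturns u ρ K)
    (hu : CrossRatioInequality u) {p : ℝ} (hp : IsPowerLawAt u p) :
    ∃ s > (1 : ℝ), ∃ A, ∀ n, |returnMap u ρ n 1 (-1) p - p| ^ s ≤
      A * (1 + returnLen u ρ n p / returnLen u ρ (n + 1) p) * returnLen u ρ (n + 1) p ^ s := by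
  obtain ⟨s, hs, α, hα, β, hβ, hpow⟩ := hp
  obtain ⟨C, hC, hpull⟩ := H.exists_abs_map_sub_map_le hK hu
  have hK₁ := hK.1
  refine ⟨s, hs, 2 * C * β * K ^ s / α, fun n => ?_⟩
  obtain ⟨hγ, hγ'⟩ := H.gaussMap_mem_Ioo n
  have hε := returnLen_nonneg (u := u) (ρ := ρ) (n + 1) p
  set ε := returnLen u ρ (n + 1) p
  set r := returnLen u ρ n p / ε
  have hr : 0 ≤ r := div_nonneg (returnLen_nonneg _ _) hε
  set z := returnMap u ρ n 0 (-1) p with hz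
  set w := returnMap u ρ n 1 (-1) p with hw
  have hzp : |z - p| ≤ 2 := H.abs_sub_le_two_of_position n (by
    rw [hz, H.position_returnMap, abs_lt]; push_cast; constructor <;> linarith)
  have hwp : |w - p| ≤ 2 := H.abs_sub_le_two_of_position n (by
    rw [hw, H.position_returnMap, abs_lt]; push_cast; constructor <;> linarith)
  have hnear : |u z - u p| ≤ β * (K * ε) ^ s := (hpow z hzp).2.trans (by
    gcongr; exact hK.abs_preimage_sub_le n p)
  refine le_of_mul_le_mul_left ?_ hα
  calc α * |w - p| ^ s ≤ |u w - u p| := (hpow w hwp).1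
    _ ≤ |u w - u z| + |u z - u p| := abs_sub_le _ _ _
    _ ≤ ((1 + r) * C + 1) * |u z - u p| := by linarith [hpull n p]
    _ ≤ 2 * C * (1 + r) * (β * (K * ε) ^ s) := by gcongr; nlinarith
    _ = α * (2 * C * β * K ^ s / α * (1 + r) * ε ^ s) := by
      rw [Real.mul_rpow (by linarith) hε]
      field_simp

/-- The ratio `r` of the two return lengths satisfies `r ^ s ≤ A * (1 + r)`, and `s > 1`. -/
lemma exists_returnLen_le_succ_of_isPowerLawAt (hK : HasComparableReturns u ρ K)
    (hu : CrossRatioInequality u) {p : ℝ} (hp : IsPowerLawAt u p) :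
    ∃ R, 1 ≤ R ∧ ∀ n, returnLen u ρ n p ≤ R * returnLen u ρ (n + 1) p := by
  obtain ⟨s, hs, A, hA⟩ := H.exists_rpow_abs_preimage_sub_le hK hu hp
  obtain ⟨R, hR, hbound⟩ := exists_bound_of_rpow_le_mul_one_add hs ((1 + K) ^ s * A)
  refine ⟨R, hR, fun n => ?_⟩
  have hK₁ : 0 ≤ 1 + K := by linarith [hK.1]
  have hε := H.returnLen_pos (n + 1) p
  rw [← div_le_iff₀ hε]
  have hr := div_nonneg (returnLen_nonneg (u := u) (ρ := ρ) n p) hε.le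
  refine hbound _ hr (le_of_mul_le_mul_right ?_ (Real.rpow_pos_of_pos hε s))
  rw [← Real.mul_rpow hr hε.le, div_mul_cancel₀ _ hε.ne']
  calc returnLen u ρ n p ^ s ≤ ((1 + K) * |returnMap u ρ n 1 (-1) p - p|) ^ s :=
        Real.rpow_le_rpow (returnLen_nonneg _ _) (H.returnLen_le_abs_preimage_sub hK n p)
          (by linarith)
    _ = (1 + K) ^ s * |returnMap u ρ n 1 (-1) p - p| ^ s := Real.mul_rpow hK₁ (abs_nonneg _)
    _ ≤ _ := (mul_le_mul_of_nonneg_left (hA n) (by positivity)).trans_eq (by ring)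

lemma exists_isComparable_returnLen_succ_iterate (hK : HasComparableReturns u ρ K)
    (hu : CrossRatioInequality u) {p : ℝ} (hp : IsPowerLawAt u p) :
    ∃ C, 1 ≤ C ∧ ∀ n i, i ≤ qDen ρ (n + 1) →
      IsComparable C (returnLen u ρ n (u^[i] p)) (returnLen u ρ (n + 1) (u^[i] p)) := by
  obtain ⟨R, hR, hcrit⟩ := H.exists_returnLen_le_succ_of_isPowerLawAt hK hu hp
  obtain ⟨C, hC, hpull⟩ := H.exists_returnLen_le_succ_of_deckMap hK hu
  have hK₁ := hK.1
  set M := (1 + K) * (R * K)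
  have hM : 0 ≤ M := by positivity
  refine ⟨(1 + M) * C + (1 + K), by nlinarith [mul_nonneg hM (by linarith : 0 ≤ C)],
    fun n i hi => ⟨?_, ?_⟩⟩
  · have hnext : returnLen u ρ n (returnMap u ρ n 0 1 p) ≤
        M * returnLen u ρ (n + 1) (returnMap u ρ n 0 1 p) :=
      calc returnLen u ρ n (returnMap u ρ n 0 1 p) ≤ (1 + K) * returnLen u ρ n p :=
            (H.isComparable_returnLen_next hK n p).2
        _ ≤ (1 + K) * (R * (K * returnLen u ρ (n + 1) (returnMap u ρ n 0 1 p))) := by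
            gcongr
            refine (hcrit n).trans ?_
            gcongr
            exact returnMap_succ_one_zero (u := u) (ρ := ρ) n ▸ (hK.2 (n + 1) p).1
        _ = M * returnLen u ρ (n + 1) (returnMap u ρ n 0 1 p) := by ring
    have hforward : deckMap u (qDen ρ (n + 1) - i : ℕ) (pNum ρ (n + 1)) (u^[i] p) =
        returnMap u ρ n 0 1 p := by
      rw [deckMap_natCast, ← Function.iterate_add_apply, Nat.sub_add_cancel hi, returnMap,
        zero_mul, one_mul, zero_add, zero_mul, one_mul, zero_add, deckMap_natCast]
    rw [← hforward] at hnext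
    exact (hpull _ (Nat.sub_le _ _) hM hnext).trans
      (mul_le_mul_of_nonneg_right (by linarith) (returnLen_nonneg _ _))
  · exact (H.returnLen_succ_le hK n _).trans
      (mul_le_mul_of_nonneg_right (le_add_of_nonneg_left (by positivity)) (returnLen_nonneg _ _))

end IrrationalFactor

/-! ### Adjacent atoms -/

lemma HasComparableReturns.isComparable_atomLen {u : CircleDeg1Liftˣ} {ρ K : ℝ}
    (hK : HasComparableReturns u ρ K) (p : ℝ) (l j : ℕ) :
    IsComparable K (atomLen u ρ p l j) (atomLen u ρ p l (j + qDen ρ l)) := by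
  rw [atomLen_eq_returnLen, atomLen_eq_returnLen, add_comm, Function.iterate_add_apply,
    returnLen_iterate_qDen]
  exact hK.2 l _

namespace IrrationalFactor

variable {u : CircleDeg1Liftˣ} {ρ K : ℝ} (H : IrrationalFactor u ρ)
include H

lemma eq_of_iterate_eq_iterate_add_int {x : ℝ} {i j : ℕ} {k : ℤ} (h : u^[j] x = u^[i] x + k) :
    i = j := by
  have hlift := congrArg H.lift h
  rw [CircleDeg1Lift.map_add_int, lift_iterate, lift_iterate] at hlift
  by_contra hij
  have hne : (j : ℝ) - i ≠ 0 := sub_ne_zero.mpr fun hc => hij (Nat.cast_injective hc).symm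
  refine H.irrational ⟨k / (j - i : ℤ), ?_⟩
  push_cast
  rw [div_eq_iff hne]
  linarith

lemma index_eq_of_adjacentAtoms {p : ℝ} {l₁ j₁ l₂ j₂ : ℕ}
    (h : AdjacentAtoms u ρ p l₁ j₁ l₂ j₂) :
    j₁ = j₂ ∨ j₁ = j₂ + qDen ρ l₂ ∨ j₁ + qDen ρ l₁ = j₂ ∨
      j₁ + qDen ρ l₁ = j₂ + qDen ρ l₂ := by
  obtain ⟨-, x, hx, y, hy, k, hxy⟩ := h
  have heq : ∀ {i j : ℕ} (m m' : ℤ), u^[j] p - m' = u^[i] p - m + k → i = j := fun m m' h =>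
    H.eq_of_iterate_eq_iterate_add_int (k := m' - m + k) (by push_cast; linarith)
  simp only [atomEnds, mem_insert_iff, mem_singleton_iff] at hx hy
  rcases hx with rfl | rfl <;> rcases hy with rfl | rfl
  · exact Or.inl (heq 0 0 (by simpa using hxy))
  · exact Or.inr (Or.inl (heq 0 (pNum ρ l₂) (by simpa using hxy)))
  · exact Or.inr (Or.inr (Or.inl (heq (pNum ρ l₁) 0 (by simpa using hxy))))
  · exact Or.inr (Or.inr (Or.inr (heq (pNum ρ l₁) (pNum ρ l₂) (by simpa using hxy))))

lemma exists_isComparable_atomLen_succ (hK : HasComparableReturns u ρ K)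
    (hu : CrossRatioInequality u) {p : ℝ} (hp : IsPowerLawAt u p) :
    ∃ C, 1 ≤ C ∧ ∀ n i j, i ≤ qDen ρ (n + 1) →
      j = i ∨ j + qDen ρ n = i + qDen ρ (n + 1) →
      IsComparable C (atomLen u ρ p n j) (atomLen u ρ p (n + 1) i) := by
  obtain ⟨C, hC, hsucc⟩ := H.exists_isComparable_returnLen_succ_iterate hK hu hp
  have hK₁ := hK.1
  have hle : C ≤ K * (1 + K) * C := le_mul_of_one_le_left (by linarith) (by nlinarith)
  refine ⟨K * (1 + K) * C, hC.trans hle, fun n i j hi hij => ?_⟩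
  have hlevel := hsucc n i hi
  rcases hij with rfl | hij
  · simpa only [atomLen_eq_returnLen] using
      hlevel.mono (returnLen_nonneg _ _) (returnLen_nonneg _ _) hle
  have hshift := hK.isComparable_atomLen p n j
  have hreturn := (H.isComparable_returnLen_next hK n (u^[i] p)).symm
  rw [← returnMap_succ_one_zero, ← returnLen_iterate_qDen, ← Function.iterate_add_apply,
    add_comm (qDen ρ (n + 1)), ← hij, ← atomLen_eq_returnLen] at hreturn
  rw [atomLen_eq_returnLen _ (n + 1)]
  exact (hshift.trans (by linarith) (by linarith) hreturn).trans (by positivity) (by linarith)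
    hlevel

lemma exists_isComparable_atomLen_of_adjacentAtoms (hu : CrossRatioInequality u) {p : ℝ}
    (hp : IsPowerLawAt u p) :
    ∃ C, 1 ≤ C ∧ ∀ {n l₁ j₁ l₂ j₂}, IsAtomIdx ρ n l₁ j₁ → IsAtomIdx ρ n l₂ j₂ →
      AdjacentAtoms u ρ p l₁ j₁ l₂ j₂ →
      IsComparable C (atomLen u ρ p l₁ j₁) (atomLen u ρ p l₂ j₂) := by
  obtain ⟨K, hK⟩ := H.exists_hasComparableReturns hu
  obtain ⟨C, hC, hsucc⟩ := H.exists_isComparable_atomLen_succ hK hu hp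
  have hlen : ∀ l j, 0 ≤ atomLen u ρ p l j := fun _ _ => abs_nonneg _
  refine ⟨max K C, hC.trans (le_max_right _ _), fun {n l₁ j₁ l₂ j₂} h₁ h₂ hadj => ?_⟩
  have hq := qDen_le_succ H.irrational H.mem_Ioo n
  have hne := hadj.1
  have hindex := H.index_eq_of_adjacentAtoms hadj
  have hsame := hK.isComparable_atomLen p
  rcases h₁ with ⟨rfl, h₁⟩ | ⟨rfl, h₁⟩ <;> rcases h₂ with ⟨rfl, h₂⟩ | ⟨rfl, h₂⟩
  · refine IsComparable.mono (hlen _ _) (hlen _ _) (le_max_left K C) ?_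
    rcases hindex with rfl | rfl | rfl | h
    · exact absurd rfl hne
    · exact (hsame _ _).symm
    · exact hsame _ _
    · exact absurd (by rw [Nat.add_right_cancel h]) hne
  · exact (hsucc _ _ _ (by omega) (by omega)).mono (hlen _ _) (hlen _ _) (le_max_right K C)
  · exact (hsucc _ _ _ (by omega) (by omega)).symm.mono (hlen _ _) (hlen _ _) (le_max_right K C)
  · refine absurd (?_ : (_, j₁) = (_, j₂)) hne
    rw [show j₁ = j₂ by omega]

end IrrationalFactor

/-! ### Multicritical circle maps -/

lemma sub_mem_Icc_of_deriv_mem_Icc {F : ℝ → ℝ} {α β e p x y : ℝ} (hF : Differentiable ℝ F)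
    (hmono : Monotone F) (hα : 0 ≤ α) (hβ : 0 ≤ β) (he : 0 ≤ e) (hxy : x < y)
    (hp : p = x ∨ p = y)
    (h : ∀ t ∈ Icc x y, deriv F t ∈ Icc (α * |t - p| ^ e) (β * |t - p| ^ e)) :
    F y - F x ∈ Icc (α / (4 * 2 ^ e) * (y - x) ^ (e + 1)) (β * (y - x) ^ (e + 1)) := by
  have hpos := sub_pos.mpr hxy
  have hmax : max |x - p| |y - p| = y - x := by
    rcases hp with rfl | rfl
    · rw [sub_self, abs_zero, max_eq_right (abs_nonneg _), abs_of_pos hpos]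
    · rw [sub_self, abs_zero, max_eq_left (abs_nonneg _), abs_sub_comm, abs_of_pos hpos]
  have hlow := mul_rpow_mul_sub_le_of_le_deriv hF hmono hα he hxy fun t ht => (h t ht).1
  have hup := sub_le_mul_rpow_mul_sub_of_deriv_le hF hβ he hxy.le fun t ht => (h t ht).2
  rw [hmax] at hlow hup
  rw [Real.div_rpow hpos.le zero_le_two] at hlow
  rw [Real.rpow_add_one hpos.ne', ← mul_assoc β]
  refine ⟨?_, hup⟩
  calc α / (4 * 2 ^ e) * ((y - x) ^ e * (y - x))
      = α * ((y - x) ^ e / 2 ^ e) * (y - x) / 4 := by ring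
    _ ≤ F y - F x := by linarith

lemma isPowerLawAt_of_ball {F : ℝ → ℝ} (hF : Continuous F) (hinj : Function.Injective F)
    {p s α β ε : ℝ} (hs : 1 < s) (hα : 0 < α) (hβ : 0 < β) (hε : 0 < ε)
    (h : ∀ x ∈ Metric.ball p ε, |F x - F p| ∈ Icc (α * |x - p| ^ s) (β * |x - p| ^ s)) :
    IsPowerLawAt F p := by
  have hcompact : IsCompact (Metric.closedBall p 2 \ Metric.ball p ε) :=
    (isCompact_closedBall p 2).diff Metric.isOpen_ball
  have hpos : ∀ x ∉ Metric.ball p ε, 0 < |x - p| ^ s ∧ 0 < |F x - F p| := fun x hx => by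
    have hxp : x ≠ p := fun hxp => hx (hxp ▸ Metric.mem_ball_self hε)
    exact ⟨Real.rpow_pos_of_pos (abs_pos.mpr (sub_ne_zero.mpr hxp)) s,
      abs_pos.mpr (sub_ne_zero.mpr (hinj.ne hxp))⟩
  have hpow : Continuous fun x => |x - p| ^ s :=
    (continuous_id.sub continuous_const).abs.rpow_const fun _ => Or.inr (by linarith)
  have hdiff : Continuous fun x => |F x - F p| := (hF.sub continuous_const).abs
  obtain ⟨A, hA⟩ := hcompact.exists_bound_of_continuousOn
    (hpow.continuousOn.div hdiff.continuousOn fun x hx => (hpos x hx.2).2.ne')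
  obtain ⟨B, hB⟩ := hcompact.exists_bound_of_continuousOn
    (hdiff.continuousOn.div hpow.continuousOn fun x hx => (hpos x hx.2).1.ne')
  refine ⟨s, hs, min α (max 1 A)⁻¹, by positivity, max β B, by positivity, fun x hx => ?_⟩
  have hr : 0 ≤ |x - p| ^ s := by positivity
  by_cases hball : x ∈ Metric.ball p ε
  · exact Icc_subset_Icc (mul_le_mul_of_nonneg_right (min_le_left _ _) hr)
      (mul_le_mul_of_nonneg_right (le_max_left _ _) hr) (h x hball)
  · have hxK : x ∈ Metric.closedBall p 2 \ Metric.ball p ε := ⟨hx, hball⟩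
    have hA' : |x - p| ^ s / |F x - F p| ≤ A := (le_abs_self _).trans (hA x hxK)
    have hB' : |F x - F p| / |x - p| ^ s ≤ B := (le_abs_self _).trans (hB x hxK)
    rw [div_le_iff₀ (hpos x hball).2] at hA'
    rw [div_le_iff₀ (hpos x hball).1] at hB'
    refine ⟨(mul_le_mul_of_nonneg_right (min_le_right _ _) hr).trans
      ((inv_mul_le_iff₀ (by positivity)).mpr (hA'.trans ?_)), hB'.trans ?_⟩
    · gcongr
      exact le_max_right _ _
    · gcongr
      exact le_max_right _ _

namespace MCM

variable (f : MCM)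

lemma isPowerLawAt {p : ℝ} (hp : deriv f.F p = 0) : IsPowerLawAt f.F p := by
  obtain ⟨e, he, α, hα, β, hβ, ε, hε, h⟩ := f.exists_normal_form hp
  refine isPowerLawAt_of_ball f.continuous f.mono.injective (s := e + 1)
    (α := α / (4 * 2 ^ e)) (by linarith) (by positivity) hβ hε fun x hx => ?_
  have hball : ∀ y ∈ Metric.ball p ε, ∀ z ∈ Metric.ball p ε, ∀ t ∈ Icc y z,
      deriv f.F t ∈ Icc (α * |t - p| ^ e) (β * |t - p| ^ e) := fun y hy z hz t ht =>
    (h t ((convex_ball p ε).ordConnected.out hy hz ht)).1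
  have hpε : p ∈ Metric.ball p ε := Metric.mem_ball_self hε
  rcases lt_trichotomy x p with hxp | rfl | hxp
  · rw [abs_sub_comm x, abs_sub_comm (f.F x), abs_of_pos (sub_pos.mpr hxp),
      abs_of_pos (sub_pos.mpr (f.mono hxp))]
    exact sub_mem_Icc_of_deriv_mem_Icc f.differentiable f.mono.monotone hα.le hβ.le he.le hxp
      (Or.inr rfl) (hball x hx p hpε)
  · simp [Real.zero_rpow (by linarith : e + 1 ≠ 0)]
  · rw [abs_of_pos (sub_pos.mpr hxp), abs_of_pos (sub_pos.mpr (f.mono hxp))]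
    exact sub_mem_Icc_of_deriv_mem_Icc f.differentiable f.mono.monotone hα.le hβ.le he.le hxp
      (Or.inl rfl) (hball p hpε x hx)

lemma surjective : Function.Surjective f.F := fun y => by
  set k := ⌊y - f.F 0⌋
  have hint : ∀ m : ℤ, f.F m = f.F 0 + m := fun m => by rw [← f.F_add_int, zero_add]
  refine mem_range_of_exists_le_of_exists_ge f.continuous ⟨k, ?_⟩ ⟨(k + 1 : ℤ), ?_⟩
  · rw [hint]
    linarith [Int.floor_le (y - f.F 0)]
  · rw [hint, Int.cast_add, Int.cast_one]
    linarith [Int.lt_floor_add_one (y - f.F 0)]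

lemma exists_unit : ∃ u : CircleDeg1Liftˣ, ⇑u = f.F := by
  obtain ⟨u, hu⟩ := CircleDeg1Lift.isUnit_iff_bijective (f := ⟨⟨f.F, f.mono.monotone⟩, f.deg1⟩)
    |>.mpr ⟨f.mono.injective, f.surjective⟩
  exact ⟨u, congrArg DFunLike.coe hu⟩

end MCM

lemma HasRotationNumber.exists_semiconj {u : CircleDeg1Liftˣ} {ρ : ℝ} (h : HasRotationNumber u ρ) :
    ∃ φ : CircleDeg1Lift, ∀ x, φ (u x) = φ x + ρ := by
  have hτ : CircleDeg1Lift.translationNumber u = ρ :=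
    tendsto_nhds_unique (CircleDeg1Lift.tendsto_translation_number₀ _)
      (h.congr fun n => by rw [CircleDeg1Lift.coe_pow])
  obtain ⟨φ, hφ⟩ := CircleDeg1Lift.units_semiconj_of_translationNumber_eq (f₁ := u)
    (f₂ := CircleDeg1Lift.translate (Multiplicative.ofAdd ρ))
    (by rw [hτ, CircleDeg1Lift.translationNumber_translate])
  exact ⟨φ, fun x => by rw [hφ x, CircleDeg1Lift.translate_apply, add_comm]⟩

lemma MCM.exists_isComparable_atomLen_of_adjacentAtoms (f : MCM) {ρ : ℝ} (hirr : Irrational ρ)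
    (hmem : ρ ∈ Ioo (0 : ℝ) 1) (hrot : HasRotationNumber f.F ρ) {p : ℝ} (hp : deriv f.F p = 0) :
    ∃ C, 1 ≤ C ∧ ∀ {n l₁ j₁ l₂ j₂}, IsAtomIdx ρ n l₁ j₁ → IsAtomIdx ρ n l₂ j₂ →
      AdjacentAtoms f.F ρ p l₁ j₁ l₂ j₂ →
      IsComparable C (atomLen f.F ρ p l₁ j₁) (atomLen f.F ρ p l₂ j₂) := by
  have hcross := f.crossRatioInequality
  have hpower := f.isPowerLawAt hp
  obtain ⟨u, hu⟩ := f.exists_unit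
  rw [← hu] at hrot hcross hpower ⊢
  obtain ⟨φ, hφ⟩ := hrot.exists_semiconj
  exact IrrationalFactor.exists_isComparable_atomLen_of_adjacentAtoms ⟨φ, hirr, hmem, hφ⟩
    hcross hpower

/-- **Real a-priori bounds.** For a multicritical circle map `f` with
irrational rotation number `ρ`, there is `C > 1` depending only on `f` such that any
two adjacent atoms of any dynamical partition `P_n(c_k)` associated to a critical
point `c_k` have comparable lengths. -/
theorem real_a_priori_bounds
    (f : MCM) (ρ : ℝ) (hirr : Irrational ρ) (hmem : ρ ∈ Set.Ioo (0 : ℝ) 1)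
    (hrot : HasRotationNumber f.F ρ) :
    ∃ C : ℝ, 1 < C ∧ ∀ (k : Fin f.N) (n ℓ₁ j₁ ℓ₂ j₂ : ℕ),
      IsAtomIdx ρ n ℓ₁ j₁ → IsAtomIdx ρ n ℓ₂ j₂ →
      AdjacentAtoms f.F ρ (f.c k) ℓ₁ j₁ ℓ₂ j₂ →
      C⁻¹ * atomLen f.F ρ (f.c k) ℓ₂ j₂ ≤ atomLen f.F ρ (f.c k) ℓ₁ j₁ ∧
        atomLen f.F ρ (f.c k) ℓ₁ j₁ ≤ C * atomLen f.F ρ (f.c k) ℓ₂ j₂ := by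
  choose C hC hcomparable using fun k =>
    f.exists_isComparable_atomLen_of_adjacentAtoms hirr hmem hrot (f.isCrit k)
  have hlt : ∀ k, C k < 1 + ∑ i, C i := fun k =>
    (Finset.single_le_sum (fun i _ => zero_le_one.trans (hC i)) (Finset.mem_univ k)).trans_lt
      (lt_one_add _)
  have hone : 1 < 1 + ∑ i, C i := (hC ⟨0, f.N_pos⟩).trans_lt (hlt _)
  refine ⟨1 + ∑ i, C i, hone, fun k n l₁ j₁ l₂ j₂ h₁ h₂ hadj => ?_⟩
  have hmono := (hcomparable k h₁ h₂ hadj).mono (abs_nonneg _) (abs_nonneg _) (hlt k).le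
  exact ⟨(inv_mul_le_iff₀ (zero_lt_one.trans hone)).mpr hmono.2, hmono.1⟩
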